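/- There exists a Riemannian metric g of class C^{2,1} on the open unit ball B₁ ⊂ ℝ² whose Gauss curvature K satisfies K(x) ≥ 0 for all x ∈ B₁, and such that for every radius r with 0 < r ≤ 1 there is no map u : B_r → ℝ³ of class C² satisfying (∇u(x))ᵀ ∇u(x) = g(x) for all x ∈ B_r. (Nadirashvili–Yuan, 2008.) -/

import Mathlib

noncomputable section
open Matrix Set Metric

attribute [local instance] Matrix.normedAddCommGroup Matrix.normedSpace

abbrev E2 := EuclideanSpace ℝ (Fin 2)

/-- The Jacobian matrix (3×2) of a map `u : ℝ² → ℝ³` at a point `x`. -/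
def Jac (u : E2 → EuclideanSpace ℝ (Fin 3)) (x : E2) : Matrix (Fin 3) (Fin 2) ℝ :=
  Matrix.of fun i j => fderiv ℝ u x (EuclideanSpace.single j 1) i

/-- Partial derivative `∂ᵢf` of a scalar function on `ℝ²`. -/
def pd (i : Fin 2) (f : E2 → ℝ) (x : E2) : ℝ :=
  fderiv ℝ f x (EuclideanSpace.single i 1)

/-- The Gauss curvature of a metric `g` on (an open subset of) `ℝ²`, via the Brioschi
formula, with `E = g₁₁`, `F = g₁₂`, `G = g₂₂`. -/
def gaussK (g : E2 → Matrix (Fin 2) (Fin 2) ℝ) (x : E2) : ℝ :=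
  let E : E2 → ℝ := fun y => g y 0 0
  let F : E2 → ℝ := fun y => g y 0 1
  let G : E2 → ℝ := fun y => g y 1 1
  let M₁ : Matrix (Fin 3) (Fin 3) ℝ :=
    !![-(1 / 2) * pd 1 (pd 1 E) x + pd 0 (pd 1 F) x - (1 / 2) * pd 0 (pd 0 G) x,
        (1 / 2) * pd 0 E x, pd 0 F x - (1 / 2) * pd 1 E x;
      pd 1 F x - (1 / 2) * pd 0 G x, E x, F x;
      (1 / 2) * pd 1 G x, F x, G x]
  let M₂ : Matrix (Fin 3) (Fin 3) ℝ :=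
    !![0, (1 / 2) * pd 1 E x, (1 / 2) * pd 0 G x;
      (1 / 2) * pd 1 E x, E x, F x;
      (1 / 2) * pd 0 G x, F x, G x]
  (M₁.det - M₂.det) / (E x * G x - F x ^ 2) ^ 2

/-!
The metric is `g = e^{-2F}|dx|²`, whose curvature has the sign of `Δ F`. The potential `F` is a
weighted series of `C^{2,1}` bumps, each with Laplacian a nonnegative tent over a disc, so that
`K > 0` in the discs, vanishing linearly at their boundaries, and `K = 0` elsewhere. The discs are
*hubs* shrinking to the origin, together with tiny isolated discs that accumulate at every boundary
point of every hub.

Near the origin, a `C²` isometric immersion is a graph `Z` over two of its coordinates `X`, `Y`,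
with `C¹` slopes: `dZ = s dX + p dY`. Gauss's equation reads `D³ ds ∧ dp = k dx₀ ∧ dx₁`, where
`D` is the Jacobian of `(X, Y)` and `k` a positive multiple of `K`. Hence `dp ≠ 0` inside a hub. It
follows that `dp ≠ 0` somewhere on its boundary, as otherwise `p` would be constant there and have a
critical point inside. At such a point `K = 0`, and the symmetry `dX ∧ ds + dY ∧ dp = 0` then forces
`dX ∧ dp ≠ 0`; so `(X, p)` are coordinates near some small isolated disc.

In these coordinates the partial Legendre transform `V = Z - p Y` satisfies `dV = s dX - Y dp`, and
`∂²V/∂X²` is, up to a sign, a positive multiple of `k`. Let `t₀` be the maximum of `p` over the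
small disc, attained at a boundary point. For `p = t ≥ t₀` nearby, `V` is affine in `X`, while for
`t < t₀` linear vanishing of `K` makes `∂²V/∂X²` at least of order `t₀ - t` on an interval of length
comparable to `t₀ - t`. A second difference of `V` in `X` with a fixed step thus vanishes for
`t ≥ t₀` but is at least of order `(t₀ - t)²` for `t < t₀`, although it is twice differentiable in
`t` at `t₀`: a contradiction.
-/

/-! ### Maps of class `C^{2,1}` -/

/-- A map between normed spaces is of class `C^{2,1}`, in the local sense: twice continuously
differentiable with locally Lipschitz second derivative. -/
structure IsC21 {E F : Type*} [NormedAddCommGroup E] [NormedSpace ℝ E] [NormedAddCommGroup F]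
    [NormedSpace ℝ F] (f : E → F) : Prop where
  contDiff : ContDiff ℝ 2 f
  locallyLipschitz : LocallyLipschitz (fderiv ℝ (fderiv ℝ f))

section IsC21

variable {E F G : Type*} [NormedAddCommGroup E] [NormedSpace ℝ E] [NormedAddCommGroup F]
  [NormedSpace ℝ F] [NormedAddCommGroup G] [NormedSpace ℝ G]

theorem locallyLipschitz_clm_comp {X : Type*} [PseudoEMetricSpace X] {L : X → F →L[ℝ] G}
    {M : X → E →L[ℝ] F} (hL : LocallyLipschitz L) (hM : LocallyLipschitz M) :
    LocallyLipschitz fun x => (L x).comp (M x) := by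
  have smooth : ContDiff ℝ 1 fun q : (F →L[ℝ] G) × (E →L[ℝ] F) => q.1.comp q.2 :=
    contDiff_fst.clm_comp contDiff_snd
  simpa only [Function.comp_def] using smooth.locallyLipschitz.comp (hL.prodMk hM)

theorem IsC21.of_contDiff {f : E → F} (hf : ContDiff ℝ 3 f) : IsC21 f where
  contDiff := hf.of_le (by norm_num)
  locallyLipschitz := ((hf.fderiv_right (m := 2) (by norm_num)).fderiv_right (m := 1)
    (by norm_num)).locallyLipschitz

theorem IsC21.contDiff_fderiv {f : E → F} (hf : IsC21 f) : ContDiff ℝ 1 (fderiv ℝ f) :=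
  hf.contDiff.fderiv_right (by norm_num)

theorem IsC21.differentiable {f : E → F} (hf : IsC21 f) : Differentiable ℝ f :=
  hf.contDiff.differentiable (by norm_num)

theorem IsC21.differentiable_fderiv {f : E → F} (hf : IsC21 f) :
    Differentiable ℝ (fderiv ℝ f) :=
  hf.contDiff_fderiv.differentiable (by norm_num)

theorem IsC21.comp {η : F → G} {f : E → F} (hη : IsC21 η) (hf : IsC21 f) : IsC21 (η ∘ f) := by
  have first (x) : HasFDerivAt (η ∘ f) ((fderiv ℝ η (f x)).comp (fderiv ℝ f x)) x :=
    (hη.differentiable _).hasFDerivAt.comp x (hf.differentiable x).hasFDerivAt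
  have second (x) : HasFDerivAt (fun y => (fderiv ℝ η (f y)).comp (fderiv ℝ f y)) _ x :=
    ((hη.differentiable_fderiv (f x)).hasFDerivAt.comp x
      (hf.differentiable x).hasFDerivAt).clm_comp (hf.differentiable_fderiv x).hasFDerivAt
  refine ⟨hη.contDiff.comp hf.contDiff, ?_⟩
  rw [funext fun x => (first x).fderiv, funext fun x => (second x).fderiv]
  have lip_f := (hf.contDiff.of_le one_le_two).locallyLipschitz
  have lip_η' : LocallyLipschitz fun x => fderiv ℝ η (f x) :=
    hη.contDiff_fderiv.locallyLipschitz.comp lip_f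
  have lip_η'' : LocallyLipschitz fun x => fderiv ℝ (fderiv ℝ η) (f x) :=
    hη.locallyLipschitz.comp lip_f
  have lip_f' := hf.contDiff_fderiv.locallyLipschitz
  have outer := locallyLipschitz_clm_comp
    ((ContinuousLinearMap.compL ℝ E F G).lipschitz.locallyLipschitz.comp lip_η')
    hf.locallyLipschitz
  have inner := locallyLipschitz_clm_comp
    ((ContinuousLinearMap.compL ℝ E F G).flip.lipschitz.locallyLipschitz.comp lip_f')
    (locallyLipschitz_clm_comp lip_η'' lip_f')
  simpa only [Function.comp_def] using outer.add inner

theorem IsC21.of_hasFDerivAt {f : E → F} {f₁ : E → E →L[ℝ] F} {f₂ : E → E →L[ℝ] E →L[ℝ] F}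
    (h₁ : ∀ x, HasFDerivAt f (f₁ x) x) (h₂ : ∀ x, HasFDerivAt f₁ (f₂ x) x)
    (hf₂ : LocallyLipschitz f₂) : IsC21 f := by
  have e₁ : fderiv ℝ f = f₁ := funext fun x => (h₁ x).fderiv
  have e₂ : fderiv ℝ f₁ = f₂ := funext fun x => (h₂ x).fderiv
  refine ⟨?_, by rwa [e₁, e₂]⟩
  rw [show (2 : WithTop ℕ∞) = 1 + 1 by norm_num, contDiff_succ_iff_fderiv, e₁,
    contDiff_one_iff_fderiv, e₂]
  exact ⟨fun x => (h₁ x).differentiableAt, by simp, fun x => (h₂ x).differentiableAt,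
    hf₂.continuous⟩

theorem IsC21.of_hasDerivAt {η η₁ η₂ : ℝ → F} (h₁ : ∀ t, HasDerivAt η (η₁ t) t)
    (h₂ : ∀ t, HasDerivAt η₁ (η₂ t) t) (hη₂ : LocallyLipschitz η₂) : IsC21 η := by
  let S (H : Type _) [NormedAddCommGroup H] [NormedSpace ℝ H] : H →L[ℝ] ℝ →L[ℝ] H :=
    ContinuousLinearMap.toSpanSingletonCLE.toContinuousLinearMap
  refine .of_hasFDerivAt (f₁ := S F ∘ η₁) (f₂ := S (ℝ →L[ℝ] F) ∘ S F ∘ η₂)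
    (fun t => (h₁ t).hasFDerivAt)
    (fun t => ((S F).hasFDerivAt.comp_hasDerivAt t (h₂ t)).hasFDerivAt) ?_
  exact (S _).lipschitz.locallyLipschitz.comp ((S F).lipschitz.locallyLipschitz.comp hη₂)

theorem dist_iteratedFDeriv_two (f : E → F) (x y : E) :
    dist (iteratedFDeriv ℝ 2 f x) (iteratedFDeriv ℝ 2 f y) =
      dist (fderiv ℝ (fderiv ℝ f) x) (fderiv ℝ (fderiv ℝ f) y) := by
  have h₂ (z) : iteratedFDeriv ℝ 2 f z = (continuousMultilinearCurryRightEquiv' ℝ 1 E F).symm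
      (iteratedFDeriv ℝ 1 (fderiv ℝ f) z) :=
    iteratedFDeriv_succ_eq_comp_right (n := 1)
  have h₁ (z) : iteratedFDeriv ℝ 1 (fderiv ℝ f) z =
      (continuousMultilinearCurryFin1 ℝ E (E →L[ℝ] F)).symm (fderiv ℝ (fderiv ℝ f) z) := by
    ext m
    simp [iteratedFDeriv_one_apply]
  simp only [h₂, h₁, LinearIsometryEquiv.dist_map]

theorem IsC21.exists_lipschitzOnWith {f : E → F} (hf : IsC21 f) {K : Set E} (hK : IsCompact K) :
    ∃ L, LipschitzOnWith L (iteratedFDeriv ℝ 2 f) K := by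
  obtain ⟨L, hL⟩ := hf.locallyLipschitz.locallyLipschitzOn.exists_lipschitzOnWith_of_compact hK
  refine ⟨L, LipschitzOnWith.of_dist_le_mul fun x hx y hy => ?_⟩
  rw [dist_iteratedFDeriv_two]
  exact hL.dist_le_mul x hx y hy

theorem IsC21.exists_bound {f : E → F} (hf : IsC21 f) {K : Set E} (hK : IsCompact K) :
    ∃ A : NNReal, (∀ x ∈ K, ‖f x‖ ≤ A ∧ ‖fderiv ℝ f x‖ ≤ A ∧ ‖fderiv ℝ (fderiv ℝ f) x‖ ≤ A) ∧
      LipschitzOnWith A (fderiv ℝ (fderiv ℝ f)) K := by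
  obtain ⟨a, ha⟩ := hK.exists_bound_of_continuousOn hf.contDiff.continuous.continuousOn
  obtain ⟨b, hb⟩ := hK.exists_bound_of_continuousOn hf.contDiff_fderiv.continuous.continuousOn
  obtain ⟨c, hc⟩ := hK.exists_bound_of_continuousOn
    (hf.contDiff_fderiv.continuous_fderiv one_ne_zero).continuousOn
  obtain ⟨L, hL⟩ := hf.locallyLipschitz.locallyLipschitzOn.exists_lipschitzOnWith_of_compact hK
  refine ⟨max L (max a (max b c)).toNNReal, fun x hx => ?_, hL.weaken (le_max_left _ _)⟩
  have hle : max a (max b c) ≤ (max L (max a (max b c)).toNNReal : NNReal) :=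
    (Real.le_coe_toNNReal _).trans (by simp)
  simp only [max_le_iff] at hle
  exact ⟨(ha x hx).trans hle.1, (hb x hx).trans hle.2.1, (hc x hx).trans hle.2.2⟩

end IsC21

theorem lipschitzOnWith_tsum_smul {X ι F : Type*} [PseudoMetricSpace X] [NormedAddCommGroup F]
    [NormedSpace ℝ F] [CompleteSpace F] {w A : ι → NNReal} {f : ι → X → F} {s : Set X}
    (hw : Summable fun i => w i * A i) (hf : ∀ i, LipschitzOnWith (A i) (f i) s)
    (hsum : ∀ x ∈ s, Summable fun i => (w i : ℝ) • f i x) :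
    LipschitzOnWith (∑' i, w i * A i) (fun x => ∑' i, (w i : ℝ) • f i x) s := by
  refine LipschitzOnWith.of_dist_le_mul fun x hx y hy => ?_
  rw [dist_eq_norm, ← (hsum x hx).tsum_sub (hsum y hy)]
  refine tsum_of_norm_bounded ((NNReal.hasSum_coe.2 hw.hasSum).mul_right (dist x y)) fun i => ?_
  rw [← smul_sub, norm_smul, NNReal.norm_eq, NNReal.coe_mul, mul_assoc, ← dist_eq_norm]
  gcongr
  exact (hf i).dist_le_mul x hx y hy

theorem exists_pos_summable_mul {ι : Type*} [Countable ι] (A : ι → ℕ → NNReal) :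
    ∃ w : ι → NNReal, (∀ i, 0 < w i) ∧ ∀ n, Summable fun i => w i * A i n := by
  obtain ⟨_⟩ := nonempty_encodable ι
  obtain ⟨e, he, _, hsum, -⟩ := NNReal.exists_pos_sum_of_countable one_ne_zero ι
  let S (i : ι) : NNReal := 1 + ∑ m ∈ Finset.range (Encodable.encode i + 1), A i m
  have hS (i) : 0 < S i := by positivity
  refine ⟨fun i => e i / S i, fun i => div_pos (he i) (hS i), fun n => ?_⟩
  have hle (i) (hi : n ≤ Encodable.encode i) : e i / S i * A i n ≤ e i := by
    have hA : A i n ≤ S i := (Finset.single_le_sum (fun m _ => zero_le)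
      (Finset.mem_range_succ_iff.2 hi)).trans le_add_self
    rw [div_mul_eq_mul_div, div_le_iff₀ (hS i)]
    gcongr
  have hfin : {i : ι | ¬ n ≤ Encodable.encode i}.Finite := by
    simpa only [not_le] using!
      (finite_lt_nat n).preimage (Encodable.encode_injective (α := ι)).injOn
  refine NNReal.summable_coe.1 ((NNReal.summable_coe.2 hsum.summable).of_norm_bounded_eventually ?_)
  filter_upwards [hfin.compl_mem_cofinite] with i hi
  rw [Real.norm_of_nonneg (NNReal.coe_nonneg _)]
  exact_mod_cast hle i (not_not.1 hi)

theorem summable_smul_of_bounded_on_balls {E F ι : Type*} [SeminormedAddCommGroup E]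
    [NormedAddCommGroup F] [NormedSpace ℝ F] [CompleteSpace F] {w : ι → NNReal}
    {A : ι → ℕ → NNReal} (hw : ∀ n, Summable fun i => w i * A i n) {f : ι → E → F}
    (hf : ∀ i (n : ℕ), ∀ x ∈ closedBall (0 : E) n, ‖f i x‖ ≤ A i n) (x : E) :
    Summable fun i => (w i : ℝ) • f i x := by
  obtain ⟨n, hn⟩ := exists_nat_ge ‖x‖
  refine .of_norm_bounded (NNReal.summable_coe.2 (hw n)) fun i => ?_
  rw [norm_smul, NNReal.norm_eq, NNReal.coe_mul]
  gcongr
  exact hf i n x (mem_closedBall_zero_iff.2 hn)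

section Series

variable {E F ι : Type*} [NormedAddCommGroup E] [NormedSpace ℝ E] [NormedAddCommGroup F]
  [NormedSpace ℝ F] [CompleteSpace F]

theorem hasFDerivAt_tsum_smul_of_bounded_on_balls {w : ι → NNReal} {A : ι → ℕ → NNReal}
    (hw : ∀ n, Summable fun i => w i * A i n) {f : ι → E → F} {f' : ι → E → E →L[ℝ] F}
    (hf : ∀ i x, HasFDerivAt (f i) (f' i x) x)
    (hA : ∀ i (n : ℕ), ∀ x ∈ closedBall (0 : E) n, ‖f i x‖ ≤ A i n)
    (hA' : ∀ i (n : ℕ), ∀ x ∈ closedBall (0 : E) n, ‖f' i x‖ ≤ A i n) (x : E) :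
    HasFDerivAt (fun y => ∑' i, (w i : ℝ) • f i y) (∑' i, (w i : ℝ) • f' i x) x := by
  obtain ⟨n, hn⟩ := exists_nat_gt ‖x‖
  refine hasFDerivAt_tsum_of_isPreconnected (NNReal.summable_coe.2 (hw n)) isOpen_ball
    (convex_ball (0 : E) n).isPreconnected (fun i y _ => (hf i y).const_smul (w i : ℝ))
    (fun i y hy => ?_) (mem_ball_self ((norm_nonneg x).trans_lt hn))
    (summable_smul_of_bounded_on_balls hw hA 0) (mem_ball_zero_iff.2 hn)
  rw [norm_smul, NNReal.norm_eq, NNReal.coe_mul]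
  gcongr
  exact hA' i n y (ball_subset_closedBall hy)

theorem exists_pos_weights_isC21_tsum [ProperSpace E] [Countable ι] {f : ι → E → F}
    (hf : ∀ i, IsC21 (f i)) :
    ∃ w : ι → ℝ, (∀ i, 0 < w i) ∧ IsC21 (fun x => ∑' i, w i • f i x) ∧
      ∀ x, HasSum (fun i => w i • fderiv ℝ (fderiv ℝ (f i)) x)
        (fderiv ℝ (fderiv ℝ fun y => ∑' i, w i • f i y) x) := by
  choose A hA hlip using fun i (n : ℕ) => (hf i).exists_bound (isCompact_closedBall (0 : E) n)
  obtain ⟨w, hw, hsum⟩ := exists_pos_summable_mul A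
  have first := hasFDerivAt_tsum_smul_of_bounded_on_balls hsum
    (fun i x => ((hf i).differentiable x).hasFDerivAt) (fun i n x hx => (hA i n x hx).1)
    (fun i n x hx => (hA i n x hx).2.1)
  have second := hasFDerivAt_tsum_smul_of_bounded_on_balls hsum
    (fun i x => ((hf i).differentiable_fderiv x).hasFDerivAt) (fun i n x hx => (hA i n x hx).2.1)
    (fun i n x hx => (hA i n x hx).2.2)
  have summable_second := summable_smul_of_bounded_on_balls hsum
    (f := fun i => fderiv ℝ (fderiv ℝ (f i))) (fun i n x hx => (hA i n x hx).2.2)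
  refine ⟨fun i => w i, fun i => NNReal.coe_pos.2 (hw i),
    .of_hasFDerivAt first second fun x => ?_, fun x => ?_⟩
  · obtain ⟨n, hn⟩ := exists_nat_gt ‖x‖
    refine ⟨∑' i, w i * A i n, closedBall 0 n,
      Filter.mem_of_superset (isOpen_ball.mem_nhds (mem_ball_zero_iff.2 hn)) ball_subset_closedBall,
      lipschitzOnWith_tsum_smul (hsum n) (fun i => hlip i n) fun y _ => summable_second y⟩
  · rw [funext fun y => (first y).fderiv, (second x).fderiv]
    exact (summable_second x).hasSum

end Series

/-! ### The conformal potential -/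

theorem hasDerivAt_ite {f g : ℝ → ℝ} {a d e t : ℝ} (hf : t ≤ a → HasDerivAt f d t)
    (hg : a ≤ t → HasDerivAt g e t) (hfg : f a = g a) (hde : t = a → d = e) :
    HasDerivAt (fun t => if t ≤ a then f t else g t) (if t ≤ a then d else e) t := by
  rcases lt_trichotomy t a with h | rfl | h
  · rw [if_pos h.le]
    refine (hf h.le).congr_of_eventuallyEq ?_
    filter_upwards [gt_mem_nhds h] with s hs using if_pos hs.le
  · rw [if_pos le_rfl, ← hasDerivWithinAt_univ, ← Iic_union_Ici (a := t)]
    refine .union ((hf le_rfl).hasDerivWithinAt.congr (fun s hs => if_pos hs) (if_pos le_rfl)) ?_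
    rw [hde rfl]
    have right (s) (hs : s ∈ Ici t) : (if s ≤ t then f s else g s) = g s := by
      rcases eq_or_lt_of_le (mem_Ici.1 hs) with rfl | h
      · rw [if_pos le_rfl, hfg]
      · rw [if_neg h.not_ge]
    exact (hg le_rfl).hasDerivWithinAt.congr right (right t self_mem_Ici)
  · rw [if_neg h.not_ge]
    refine (hg h.le).congr_of_eventuallyEq ?_
    filter_upwards [lt_mem_nhds h] with s hs using if_neg hs.not_ge

/-- The radial profile `η` of a planar bump: `η (‖x‖ ^ 2)` has Laplacian `max 0 (1 - ‖x‖ ^ 2)`. -/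
def profile (t : ℝ) : ℝ := if t ≤ 1 then t / 4 - t ^ 2 / 16 else Real.log t / 8 + 3 / 16

/-- The derivative of `profile`. -/
def profileDeriv (t : ℝ) : ℝ := if t ≤ 1 then 1 / 4 - t / 8 else 1 / (8 * t)

/-- The second derivative of `profile`. -/
def profileDeriv₂ (t : ℝ) : ℝ := -(1 / 8) * ((max 1 t)⁻¹) ^ 2

theorem hasDerivAt_profile (t : ℝ) : HasDerivAt profile (profileDeriv t) t := by
  refine hasDerivAt_ite (fun _ => ?_) (fun h => ?_) (by norm_num) (fun h => by rw [h]; norm_num)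
  · exact (((hasDerivAt_id t).div_const 4).sub (((hasDerivAt_id t).pow 2).div_const 16)).congr_deriv
      (by simp only [id]; norm_num; ring)
  · have ht : t ≠ 0 := by linarith
    exact (((Real.hasDerivAt_log ht).div_const 8).add_const (3 / 16)).congr_deriv (by field_simp)

theorem hasDerivAt_profileDeriv (t : ℝ) : HasDerivAt profileDeriv (profileDeriv₂ t) t := by
  have h : profileDeriv₂ t = if t ≤ 1 then -(1 / 8) else -(1 / 8) * (t⁻¹) ^ 2 := by
    unfold profileDeriv₂
    split_ifs with h
    · rw [max_eq_left h]; norm_num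
    · rw [max_eq_right (not_le.1 h).le]
  rw [h]
  refine hasDerivAt_ite (fun _ => ?_) (fun h => ?_) (by norm_num) (fun h => by rw [h]; norm_num)
  · exact (((hasDerivAt_id t).div_const 8).const_sub (1 / 4)).congr_deriv (by ring)
  · have ht : t ≠ 0 := by linarith
    refine (((hasDerivAt_inv ht).const_mul (1 / 8)).congr_deriv
      (by field_simp)).congr_of_eventuallyEq (.of_forall fun s => ?_)
    simp [mul_comm]

theorem locallyLipschitz_profileDeriv₂ : LocallyLipschitz profileDeriv₂ := by
  intro t
  have h : max 1 t ≠ 0 := (zero_lt_one.trans_le (le_max_left 1 t)).ne'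
  have smooth : ContDiffAt ℝ 1 (fun s : ℝ => -(1 / 8) * s⁻¹ ^ 2) (max 1 t) := by
    fun_prop (disch := exact h)
  obtain ⟨K, s, hs, hK⟩ := smooth.exists_lipschitzOnWith
  have max_lip : LipschitzWith 1 fun t : ℝ => max 1 t := LipschitzWith.id.const_max 1
  exact ⟨K * 1, _, max_lip.continuous.continuousAt.preimage_mem_nhds hs,
    hK.comp max_lip.lipschitzOnWith (mapsTo_preimage _ _)⟩

theorem isC21_profile : IsC21 profile :=
  .of_hasDerivAt hasDerivAt_profile hasDerivAt_profileDeriv locallyLipschitz_profileDeriv₂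

theorem profileDeriv_add_mul_profileDeriv₂ (t : ℝ) :
    4 * (profileDeriv t + t * profileDeriv₂ t) = max 0 (1 - t) := by
  unfold profileDeriv profileDeriv₂
  split_ifs with h
  · rw [max_eq_left h, max_eq_right (by linarith)]
    ring
  · have h := not_le.1 h
    rw [max_eq_right h.le, max_eq_left (by linarith)]
    field_simp
    ring

section Radial

variable {E : Type*} [NormedAddCommGroup E] [InnerProductSpace ℝ E]

theorem isC21_mul_norm_sub_sq (p : E) (a : ℝ) : IsC21 fun x => a * ‖x - p‖ ^ 2 :=
  .of_contDiff (contDiff_const.mul ((contDiff_id.sub contDiff_const).norm_sq ℝ))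

theorem fderiv_fderiv_comp_mul_norm_sub_sq {η η₁ η₂ : ℝ → ℝ} (h₁ : ∀ t, HasDerivAt η (η₁ t) t)
    (h₂ : ∀ t, HasDerivAt η₁ (η₂ t) t) (p : E) (a : ℝ) (x v w : E) :
    fderiv ℝ (fderiv ℝ fun x => η (a * ‖x - p‖ ^ 2)) x v w =
      2 * a * (η₁ (a * ‖x - p‖ ^ 2) * inner ℝ v w +
        2 * a * η₂ (a * ‖x - p‖ ^ 2) * (inner ℝ (x - p) v * inner ℝ (x - p) w)) := by
  have sq (x : E) : HasFDerivAt (fun x => a * ‖x - p‖ ^ 2) ((2 * a) • innerSL ℝ (x - p)) x := by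
    refine (((hasFDerivAt_id x).sub_const p).norm_sq.const_mul a).congr_fderiv ?_
    ext u
    simp [mul_comm a, mul_assoc]
  have first (x : E) : HasFDerivAt (fun x => η (a * ‖x - p‖ ^ 2))
      (η₁ (a * ‖x - p‖ ^ 2) • (2 * a) • innerSL ℝ (x - p)) x :=
    (h₁ _).comp_hasFDerivAt x (sq x)
  have linear : HasFDerivAt (fun x => (2 * a) • innerSL ℝ (x - p))
      ((2 * a) • innerSL ℝ : E →L[ℝ] E →L[ℝ] ℝ) x :=
    ((innerSL ℝ).hasFDerivAt.comp x ((hasFDerivAt_id x).sub_const p)).const_smul (2 * a)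
  have coeff : HasFDerivAt (fun x => η₁ (a * ‖x - p‖ ^ 2))
      (η₂ (a * ‖x - p‖ ^ 2) • (2 * a) • innerSL ℝ (x - p)) x :=
    (h₂ _).comp_hasFDerivAt x (sq x)
  have inner_apply : (innerSL ℝ : E →L[ℝ] E →L[ℝ] ℝ) v w = inner ℝ v w := rfl
  rw [funext fun x => (first x).fderiv, (coeff.fun_smul linear).fderiv]
  simp only [_root_.add_apply, _root_.smul_apply, ContinuousLinearMap.smulRight_apply,
    inner_apply, innerSL_apply_apply, smul_eq_mul]
  ring

open Laplacian in
theorem laplacian_comp_mul_norm_sub_sq [FiniteDimensional ℝ E] {η η₁ η₂ : ℝ → ℝ}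
    (h₁ : ∀ t, HasDerivAt η (η₁ t) t) (h₂ : ∀ t, HasDerivAt η₁ (η₂ t) t) (p : E) (a : ℝ) (x : E) :
    Δ (fun x => η (a * ‖x - p‖ ^ 2)) x = 2 * a *
      (Module.finrank ℝ E * η₁ (a * ‖x - p‖ ^ 2) +
        2 * (a * ‖x - p‖ ^ 2) * η₂ (a * ‖x - p‖ ^ 2)) := by
  have parseval := (stdOrthonormalBasis ℝ E).sum_sq_norm_inner_left (x - p)
  simp only [Real.norm_eq_abs, sq_abs] at parseval
  simp only [InnerProductSpace.laplacian_eq_iteratedFDeriv_stdOrthonormalBasis,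
    iteratedFDeriv_two_apply, cons_val_zero, cons_val_one,
    fderiv_fderiv_comp_mul_norm_sub_sq h₁ h₂, ← Finset.mul_sum, Finset.sum_add_distrib,
    ← sq, parseval, real_inner_self_eq_norm_sq, OrthonormalBasis.norm_eq_one,
    one_pow, mul_one, Finset.sum_const, Finset.card_univ, Fintype.card_fin, nsmul_eq_mul]
  ring

end Radial

section Potential

open Laplacian

variable {F : Type*} [NormedAddCommGroup F] [NormedSpace ℝ F]

/-- The partial derivative `∂ᵢ u` of a map on the plane. -/
def pderiv (i : Fin 2) (u : E2 → F) (x : E2) : F := fderiv ℝ u x (EuclideanSpace.single i 1)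

/-- The second partial derivative `∂ᵢ∂ⱼ u` of a map on the plane, read off the second Fréchet
derivative. -/
def pderiv₂ (i j : Fin 2) (u : E2 → F) (x : E2) : F :=
  fderiv ℝ (fderiv ℝ u) x (EuclideanSpace.single i 1) (EuclideanSpace.single j 1)

theorem laplacian_eq_sum_pderiv₂ (u : E2 → F) (x : E2) : Δ u x = ∑ i, pderiv₂ i i u x := by
  simp [InnerProductSpace.laplacian_eq_iteratedFDeriv_orthonormalBasis u
    (EuclideanSpace.basisFun (Fin 2) ℝ), iteratedFDeriv_two_apply, pderiv₂]

theorem exists_bump (p : E2) (a : ℝ) :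
    ∃ f : E2 → ℝ, IsC21 f ∧ ∀ x, Δ f x = a * max 0 (1 - a * ‖x - p‖ ^ 2) := by
  refine ⟨_, isC21_profile.comp (isC21_mul_norm_sub_sq p a), fun x => ?_⟩
  refine (laplacian_comp_mul_norm_sub_sq hasDerivAt_profile hasDerivAt_profileDeriv p a x).trans ?_
  rw [finrank_euclideanSpace_fin, ← profileDeriv_add_mul_profileDeriv₂]
  push_cast
  ring

theorem exists_pos_weights_hasSum_laplacian {ι : Type*} [Countable ι] {f : ι → E2 → ℝ}
    (hf : ∀ i, IsC21 (f i)) :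
    ∃ (w : ι → ℝ) (F : E2 → ℝ), (∀ i, 0 < w i) ∧ IsC21 F ∧
      ∀ x, HasSum (fun i => w i * Δ (f i) x) (Δ F x) := by
  obtain ⟨w, hw, hF, hsum⟩ := exists_pos_weights_isC21_tsum hf
  refine ⟨w, _, hw, hF, fun x => ?_⟩
  have entry (j : Fin 2) : HasSum (fun i => w i * pderiv₂ j j (f i) x)
      (pderiv₂ j j (fun x => ∑' i, w i • f i x) x) :=
    ((hsum x).mapL (ContinuousLinearMap.apply ℝ _ (EuclideanSpace.single j 1))).mapL
      (ContinuousLinearMap.apply ℝ ℝ (EuclideanSpace.single j 1))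
  simp only [laplacian_eq_sum_pderiv₂, Finset.mul_sum]
  exact hasSum_sum fun j _ => entry j

/-- A potential for the metric `e^{-2F}|dx|²`, whose curvature has the sign of `Δ F`. -/
theorem exists_potential {ι : Type*} [Countable ι] (p : ι → E2) {ρ : ι → ℝ} (hρ : ∀ i, 0 < ρ i) :
    ∃ F : E2 → ℝ, IsC21 F ∧ (∀ x, 0 ≤ Δ F x) ∧ (∀ x, (∀ i, x ∉ ball (p i) (ρ i)) → Δ F x = 0) ∧
      ∀ i, ∃ c > 0, ∀ x, c * (ρ i ^ 2 - ‖x - p i‖ ^ 2) ≤ Δ F x := by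
  choose f hf hΔ using fun i => exists_bump (p i) (ρ i ^ 2)⁻¹
  obtain ⟨w, F, hw, hF, hsum⟩ := exists_pos_weights_hasSum_laplacian hf
  have pos (i) : 0 < ρ i ^ 2 := pow_pos (hρ i) 2
  have nonneg (i x) : 0 ≤ w i * Δ (f i) x := by
    rw [hΔ]
    have := hw i
    have := pos i
    positivity
  refine ⟨F, hF, fun x => (hsum x).nonneg fun i => nonneg i x, fun x hx => ?_, fun i =>
    ⟨w i * ((ρ i ^ 2)⁻¹ * (ρ i ^ 2)⁻¹), by have := hw i; have := pos i; positivity, fun x => ?_⟩⟩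
  · refine (hsum x).unique (hasSum_zero.congr_fun fun i => ?_)
    have far : ρ i ≤ ‖x - p i‖ := by simpa only [mem_ball, not_lt, dist_eq_norm] using hx i
    have : 1 ≤ (ρ i ^ 2)⁻¹ * ‖x - p i‖ ^ 2 := by
      rw [inv_mul_eq_div, one_le_div (pos i)]
      exact pow_le_pow_left₀ (hρ i).le far 2
    rw [hΔ, max_eq_left (by linarith), mul_zero, mul_zero]
  · calc _ = w i * ((ρ i ^ 2)⁻¹ * (1 - (ρ i ^ 2)⁻¹ * ‖x - p i‖ ^ 2)) := by
          have := (hρ i).ne'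
          field_simp
      _ ≤ w i * Δ (f i) x := by
          rw [hΔ]
          gcongr
          exacts [(hw i).le, le_max_right _ _]
      _ ≤ Δ F x := le_hasSum (hsum x) i fun j _ => nonneg j x

end Potential

/-! ### Hubs and their satellites -/

section Discs

variable {E : Type*} [NormedAddCommGroup E] [NormedSpace ℝ E]

theorem exists_unit_seq_frequently_dist_lt [Nontrivial E] [TopologicalSpace.SeparableSpace E] :
    ∃ v : ℕ → E, (∀ n, ‖v n‖ = 1) ∧
      ∀ u, ‖u‖ = 1 → ∀ ε > 0, ∃ᶠ n in Filter.atTop, dist u (v n) < ε := by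
  have : Nonempty (sphere (0 : E) 1) := (NormedSpace.sphere_nonempty.2 zero_le_one).to_subtype
  have : SecondCountableTopology E := UniformSpace.secondCountable_of_separable E
  let d := TopologicalSpace.denseSeq (sphere (0 : E) 1)
  refine ⟨fun n => d n.unpair.1, fun n => mem_sphere_zero_iff_norm.1 (d n.unpair.1).2,
    fun u hu ε hε => Filter.frequently_atTop.2 fun N => ?_⟩
  obtain ⟨a, ha⟩ := (TopologicalSpace.denseRange_denseSeq (sphere (0 : E) 1)).exists_dist_lt
    ⟨u, mem_sphere_zero_iff_norm.2 hu⟩ hε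
  refine ⟨Nat.pair a N, Nat.right_le_pair a N, ?_⟩
  simpa only [Nat.unpair_pair] using! ha

/-- A ball of a family is isolated if the concentric ball of twice the radius meets no other ball
of the family. -/
def IsIsolatedBall {α ι : Type*} [PseudoMetricSpace α] (c : ι → α) (ρ : ι → ℝ) (j : ι) : Prop :=
  ∀ l ≠ j, ρ l + 2 * ρ j ≤ dist (c l) (c j)

theorem IsIsolatedBall.notMem_ball {α ι : Type*} [PseudoMetricSpace α] {c : ι → α} {ρ : ι → ℝ}
    {j l : ι} {x : α}
    (h : IsIsolatedBall c ρ j) (hx : x ∈ ball (c j) (2 * ρ j)) (hl : l ≠ j) :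
    x ∉ ball (c l) (ρ l) := fun hxl => by
  have := dist_triangle_left (c l) (c j) x
  linarith [h l hl, mem_ball.1 hx, mem_ball.1 hxl]

/-- The boundary of the `i`-th ball of a family avoids all the balls of the family, but each of its
points is a limit of isolated ones. -/
structure IsHubBall {α ι : Type*} [PseudoMetricSpace α] (c : ι → α) (ρ : ι → ℝ) (i : ι) :
    Prop where
  notMem_ball : ∀ x ∈ sphere (c i) (ρ i), ∀ j, x ∉ ball (c j) (ρ j)
  exists_isolated : ∀ q ∈ sphere (c i) (ρ i), ∀ ε > 0,
    ∃ j, closedBall (c j) (ρ j) ⊆ ball q ε ∧ IsIsolatedBall c ρ j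

/-- The centre of the `k`-th hub, on the ray spanned by `e`. -/
def hubCenter (e : E) (k : ℕ) : E := (1 / 4 : ℝ) ^ k • e

/-- The radius of the `k`-th hub. -/
def hubRadius (k : ℕ) : ℝ := (1 / 4 : ℝ) ^ k / 20

/-- The centres of the discs: `none` is the hub itself, `some n` the `n`-th of its satellites, which
approach its boundary in the directions `v n`. -/
def discCenter (e : E) (v : ℕ → E) : ℕ × Option ℕ → E
  | (k, none) => hubCenter e k
  | (k, some n) => hubCenter e k + (hubRadius k * (1 + (1 / 2) ^ n)) • v n

/-- The radii of the hubs (`none`) and of their satellites (`some n`). -/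
def discRadius : ℕ × Option ℕ → ℝ
  | (k, none) => hubRadius k
  | (k, some n) => hubRadius k * (1 / 2) ^ n / 100

theorem hubRadius_pos (k : ℕ) : 0 < hubRadius k := by unfold hubRadius; positivity

theorem discRadius_pos : ∀ i, 0 < discRadius i
  | (k, none) => hubRadius_pos k
  | (k, some n) => by have := hubRadius_pos k; unfold discRadius; positivity

theorem discRadius_le_hubRadius (k : ℕ) : ∀ o, discRadius (k, o) ≤ hubRadius k
  | none => le_rfl
  | some n => by
    have := hubRadius_pos k
    have : (1 / 2 : ℝ) ^ n ≤ 1 := pow_le_one₀ (by norm_num) (by norm_num)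
    unfold discRadius
    nlinarith

theorem one_sub_mul_max_pow_le_abs_pow_sub_pow {a : ℝ} (ha : 0 ≤ a) (ha1 : a ≤ 1) {m n : ℕ}
    (h : m ≠ n) : (1 - a) * max (a ^ m) (a ^ n) ≤ |a ^ m - a ^ n| := by
  wlog hmn : m < n generalizing m n
  · rw [max_comm, abs_sub_comm]
    exact this h.symm (h.symm.lt_of_le (not_lt.1 hmn))
  have next : a ^ n ≤ a * a ^ m := by
    rw [← pow_succ']
    exact pow_le_pow_of_le_one ha ha1 hmn
  have shrink : a * a ^ m ≤ a ^ m := mul_le_of_le_one_left (by positivity) ha1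
  rw [max_eq_left (next.trans shrink), abs_of_nonneg (by linarith)]
  linarith

variable {e : E} {v : ℕ → E}

theorem le_dist_hubCenter (he : ‖e‖ = 1) {k l : ℕ} (h : k ≠ l) :
    7 * (hubRadius k + hubRadius l) ≤ dist (hubCenter e k) (hubCenter e l) := by
  have gap := one_sub_mul_max_pow_le_abs_pow_sub_pow (a := 1 / 4) (by norm_num) (by norm_num) h
  have hk := le_max_left ((1 / 4 : ℝ) ^ k) ((1 / 4) ^ l)
  have hl := le_max_right ((1 / 4 : ℝ) ^ k) ((1 / 4) ^ l)
  have : (0 : ℝ) < (1 / 4) ^ k := by positivity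
  rw [hubCenter, hubCenter, dist_eq_norm, ← sub_smul, norm_smul, he, mul_one, Real.norm_eq_abs]
  unfold hubRadius
  linarith

theorem dist_satellite_hubCenter (hv : ∀ n, ‖v n‖ = 1) (k n : ℕ) :
    dist (discCenter e v (k, some n)) (hubCenter e k) = hubRadius k * (1 + (1 / 2) ^ n) := by
  have := hubRadius_pos k
  rw [discCenter, dist_eq_norm, add_sub_cancel_left, norm_smul, hv, mul_one,
    Real.norm_of_nonneg (by positivity)]

theorem dist_discCenter_hubCenter_le (hv : ∀ n, ‖v n‖ = 1) (k : ℕ) :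
    ∀ o, dist (discCenter e v (k, o)) (hubCenter e k) ≤ 2 * hubRadius k
  | none => by
    rw [discCenter, dist_self]
    exact mul_nonneg zero_le_two (hubRadius_pos k).le
  | some n => by
    have := hubRadius_pos k
    have : (1 / 2 : ℝ) ^ n ≤ 1 := pow_le_one₀ (by norm_num) (by norm_num)
    rw [dist_satellite_hubCenter hv]
    nlinarith

theorem discRadius_add_le_dist_of_hub_ne (he : ‖e‖ = 1) (hv : ∀ n, ‖v n‖ = 1) {k l : ℕ}
    (h : k ≠ l) (o : Option ℕ) {x : E} (hx : dist x (hubCenter e k) ≤ 2 * hubRadius k) :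
    discRadius (l, o) + 2 * hubRadius k ≤ dist (discCenter e v (l, o)) x := by
  have hubs := le_dist_hubCenter he h
  have radius := discRadius_le_hubRadius l o
  have center := dist_discCenter_hubCenter_le (e := e) hv l o
  have path := dist_triangle4 (hubCenter e k) x (discCenter e v (l, o)) (hubCenter e l)
  rw [dist_comm (hubCenter e k) x, dist_comm x (discCenter e v _)] at path
  have := hubRadius_pos k
  have := hubRadius_pos l
  linarith

theorem discRadius_add_le_dist_of_satellite_ne (hv : ∀ n, ‖v n‖ = 1) (k : ℕ) {m n : ℕ}
    (h : m ≠ n) : discRadius (k, some m) + 2 * discRadius (k, some n) ≤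
      dist (discCenter e v (k, some m)) (discCenter e v (k, some n)) := by
  have radial := abs_dist_sub_le (discCenter e v (k, some m)) (discCenter e v (k, some n))
    (hubCenter e k)
  rw [dist_satellite_hubCenter hv, dist_satellite_hubCenter hv] at radial
  refine le_trans ?_ radial
  have hR := hubRadius_pos k
  have gap := one_sub_mul_max_pow_le_abs_pow_sub_pow (a := 1 / 2) (by norm_num) (by norm_num) h
  have hm := le_max_left ((1 / 2 : ℝ) ^ m) ((1 / 2) ^ n)
  have hn := le_max_right ((1 / 2 : ℝ) ^ m) ((1 / 2) ^ n)
  have : (0 : ℝ) < (1 / 2) ^ m := by positivity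
  rw [← mul_sub, add_sub_add_left_eq_sub, abs_mul, abs_of_pos hR]
  unfold discRadius
  nlinarith

theorem isIsolatedBall_satellite (he : ‖e‖ = 1) (hv : ∀ n, ‖v n‖ = 1) (k n : ℕ) :
    IsIsolatedBall (discCenter e v) discRadius (k, some n) := by
  rintro ⟨l, o⟩ hl
  by_cases hkl : k = l
  · subst hkl
    obtain _ | m := o
    · have : (0 : ℝ) < hubRadius k * (1 / 2) ^ n := mul_pos (hubRadius_pos k) (by positivity)
      change hubRadius k + 2 * (hubRadius k * (1 / 2) ^ n / 100) ≤ dist (hubCenter e k) _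
      rw [dist_comm, dist_satellite_hubCenter hv]
      linarith
    · exact discRadius_add_le_dist_of_satellite_ne hv k fun h => hl (by rw [h])
  · have := discRadius_add_le_dist_of_hub_ne he hv hkl o
      (dist_discCenter_hubCenter_le hv k (some n))
    have := discRadius_le_hubRadius k (some n)
    linarith

theorem exists_satellite_subset_ball
    (hv : ∀ n, ‖v n‖ = 1) (hdense : ∀ u, ‖u‖ = 1 → ∀ ε > 0, ∃ᶠ n in Filter.atTop, dist u (v n) < ε)
    {k : ℕ} {q : E} (hq : q ∈ sphere (hubCenter e k) (hubRadius k)) {ε : ℝ} (hε : 0 < ε) :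
    ∃ n, closedBall (discCenter e v (k, some n)) (discRadius (k, some n)) ⊆ ball q ε := by
  have hR := hubRadius_pos k
  set R := hubRadius k
  set u := R⁻¹ • (q - hubCenter e k) with hu
  have norm_u : ‖u‖ = 1 := by
    rw [norm_smul, mem_sphere_iff_norm.1 hq, norm_inv, Real.norm_of_nonneg hR.le,
      inv_mul_cancel₀ hR.ne']
  have hδ : 0 < ε / (4 * R) := by positivity
  obtain ⟨n, hun, hn⟩ := ((hdense u norm_u _ hδ).and_eventually
    ((tendsto_pow_atTop_nhds_zero_of_lt_one (r := (1 / 2 : ℝ)) (by norm_num)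
      (by norm_num)).eventually (gt_mem_nhds hδ))).exists
  rw [lt_div_iff₀ (by positivity)] at hn hun
  have displacement : discCenter e v (k, some n) - q = R • (v n - u) + (R * (1 / 2) ^ n) • v n := by
    rw [smul_sub, hu, smul_inv_smul₀ hR.ne', discCenter]
    module
  have center : dist (discCenter e v (k, some n)) q ≤ R * dist u (v n) + R * (1 / 2) ^ n := by
    rw [dist_eq_norm, displacement, dist_eq_norm']
    refine (norm_add_le _ _).trans_eq ?_
    rw [norm_smul, norm_smul, hv, mul_one, Real.norm_of_nonneg hR.le,
      Real.norm_of_nonneg (by positivity)]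
  refine ⟨n, fun x hx => ?_⟩
  have hx : dist x (discCenter e v (k, some n)) ≤ R * (1 / 2) ^ n / 100 := hx
  have := dist_triangle x (discCenter e v (k, some n)) q
  rw [mem_ball]
  nlinarith

theorem notMem_ball_of_mem_sphere_hub (he : ‖e‖ = 1) (hv : ∀ n, ‖v n‖ = 1) {k : ℕ} {x : E}
    (hx : x ∈ sphere (hubCenter e k) (hubRadius k)) (j : ℕ × Option ℕ) :
    x ∉ ball (discCenter e v j) (discRadius j) := by
  obtain ⟨l, o⟩ := j
  have hR := hubRadius_pos k
  rw [mem_sphere] at hx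
  rw [mem_ball, not_lt, dist_comm]
  by_cases hkl : k = l
  · subst hkl
    obtain _ | n := o
    · exact hx.symm.le.trans_eq (dist_comm _ _)
    · have center := dist_satellite_hubCenter (e := e) hv k n
      have := dist_triangle (discCenter e v (k, some n)) x (hubCenter e k)
      have : (0 : ℝ) < hubRadius k * (1 / 2) ^ n := by positivity
      simp only [discRadius]
      linarith
  · have := discRadius_add_le_dist_of_hub_ne he hv hkl o (x := x) (by linarith)
    linarith

theorem exists_isHubBall_near_zero [Nontrivial E] [TopologicalSpace.SeparableSpace E] :
    ∃ (c : ℕ × Option ℕ → E) (ρ : ℕ × Option ℕ → ℝ), (∀ i, 0 < ρ i) ∧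
      ∀ r > 0, ∃ i, closedBall (c i) (ρ i) ⊆ ball 0 r ∧ IsHubBall c ρ i := by
  obtain ⟨e, he⟩ := exists_norm_eq E zero_le_one
  obtain ⟨v, hv, hdense⟩ := exists_unit_seq_frequently_dist_lt (E := E)
  refine ⟨discCenter e v, discRadius, discRadius_pos, fun r hr => ?_⟩
  obtain ⟨k, hk⟩ := exists_pow_lt_of_lt_one (half_pos hr) (show (1 / 4 : ℝ) < 1 by norm_num)
  refine ⟨(k, none), closedBall_subset_ball' ?_,
    fun x hx => notMem_ball_of_mem_sphere_hub he hv hx, fun q hq ε hε => ?_⟩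
  · change hubRadius k + dist (hubCenter e k) 0 < r
    have : (0 : ℝ) < (1 / 4) ^ k := by positivity
    rw [hubCenter, dist_zero_right, norm_smul, he, mul_one, Real.norm_of_nonneg this.le, hubRadius]
    linarith
  · obtain ⟨n, hn⟩ := exists_satellite_subset_ball hv hdense hq hε
    exact ⟨(k, some n), hn, isIsolatedBall_satellite he hv k n⟩

end Discs

/-! ### Conformal immersions and the Gauss equation -/

section SecondOrder

variable {F : Type*} [NormedAddCommGroup F] [NormedSpace ℝ F] {U : Set E2} {u : E2 → F} {x : E2}

theorem hasFDerivAt_of_contDiffOn (hu : ContDiffOn ℝ 1 u U) (hU : IsOpen U) (hx : x ∈ U) :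
    HasFDerivAt u (fderiv ℝ u x) x :=
  ((hu.differentiableOn one_ne_zero).differentiableAt (hU.mem_nhds hx)).hasFDerivAt

theorem contDiffOn_fderiv (hu : ContDiffOn ℝ 2 u U) (hU : IsOpen U) :
    ContDiffOn ℝ 1 (fderiv ℝ u) U :=
  hu.fderiv_of_isOpen hU (by norm_num)

theorem contDiffOn_pderiv (hu : ContDiffOn ℝ 2 u U) (hU : IsOpen U) (i : Fin 2) :
    ContDiffOn ℝ 1 (pderiv i u) U :=
  (contDiffOn_fderiv hu hU).clm_apply contDiffOn_const

theorem hasFDerivAt_pderiv (hu : ContDiffOn ℝ 2 u U) (hU : IsOpen U) (hx : x ∈ U) (i : Fin 2) :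
    HasFDerivAt (pderiv i u)
      ((fderiv ℝ (fderiv ℝ u) x).flip (EuclideanSpace.single i 1)) x :=
  ((hasFDerivAt_of_contDiffOn (contDiffOn_fderiv hu hU) hU hx).clm_apply
    (hasFDerivAt_const _ x)).congr_fderiv (by simp)

theorem continuousAt_pderiv₂ (hu : ContDiffOn ℝ 2 u U) (hU : IsOpen U) (hx : x ∈ U)
    (i j : Fin 2) : ContinuousAt (pderiv₂ i j u) x :=
  ((((contDiffOn_fderiv hu hU).continuousOn_fderiv_of_isOpen hU le_rfl).continuousAt
    (hU.mem_nhds hx)).clm_apply continuousAt_const).clm_apply continuousAt_const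

theorem pderiv_pderiv (hu : ContDiffOn ℝ 2 u U) (hU : IsOpen U) (hx : x ∈ U) (i j : Fin 2) :
    pderiv i (pderiv j u) x = pderiv₂ i j u x := by
  rw [pderiv, (hasFDerivAt_pderiv hu hU hx j).fderiv, ContinuousLinearMap.flip_apply, pderiv₂]

theorem pderiv₂_comm (hu : ContDiffOn ℝ 2 u U) (hU : IsOpen U) (hx : x ∈ U) (i j : Fin 2) :
    pderiv₂ i j u x = pderiv₂ j i u x :=
  second_derivative_symmetric_of_eventually
    (Filter.eventually_of_mem (hU.mem_nhds hx) fun _ hy =>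
      hasFDerivAt_of_contDiffOn (hu.of_le one_le_two) hU hy)
    (hasFDerivAt_of_contDiffOn (contDiffOn_fderiv hu hU) hU hx) _ _

end SecondOrder

theorem clm_ext_single {F : Type*} [NormedAddCommGroup F] [NormedSpace ℝ F] {A B : E2 →L[ℝ] F}
    (h : ∀ i, A (EuclideanSpace.single i 1) = B (EuclideanSpace.single i 1)) : A = B :=
  ContinuousLinearMap.coe_injective
    ((EuclideanSpace.basisFun (Fin 2) ℝ).toBasis.ext fun i => by simpa using h i)

theorem mixed_deriv_eq {F : Type*} [NormedAddCommGroup F] [NormedSpace ℝ F] {f : E2 → F}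
    {a : Fin 2 → E2 → F} {a' : Fin 2 → E2 →L[ℝ] F} {z : E2}
    (hf : ∀ᶠ y in nhds z, DifferentiableAt ℝ f y ∧ ∀ i, pderiv i f y = a i y)
    (ha : ∀ i, HasFDerivAt (a i) (a' i) z) (i j : Fin 2) :
    a' j (EuclideanSpace.single i 1) = a' i (EuclideanSpace.single j 1) := by
  let π (i : Fin 2) : E2 →L[ℝ] ℝ := EuclideanSpace.proj i
  have deriv_f : ∀ᶠ y in nhds z, HasFDerivAt f (∑ i, (π i).smulRight (a i y)) y := by
    filter_upwards [hf] with y hy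
    refine hy.1.hasFDerivAt.congr_fderiv (clm_ext_single fun i => ?_)
    simpa [π, Pi.single_apply, -Fin.sum_univ_two] using! hy.2 i
  have deriv₂_f := HasFDerivAt.fun_sum (u := Finset.univ) fun i _ =>
    ((ContinuousLinearMap.smulRightL ℝ E2 F (π i)).hasFDerivAt (x := a i z)).comp z (ha i)
  have symm := second_derivative_symmetric_of_eventually deriv_f deriv₂_f
    (EuclideanSpace.single i 1) (EuclideanSpace.single j 1)
  simpa [π, Pi.single_apply, -Fin.sum_univ_two] using symm

theorem hasFDerivAt_bilinear_of_eq_zero {E F G H : Type*} [NormedAddCommGroup E]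
    [NormedSpace ℝ E] [NormedAddCommGroup F] [NormedSpace ℝ F] [NormedAddCommGroup G]
    [NormedSpace ℝ G] [NormedAddCommGroup H] [NormedSpace ℝ H] (B : F →L[ℝ] G →L[ℝ] H)
    {a : E → F} {b : E → G} {a' : E →L[ℝ] F} {z : E} (ha : HasFDerivAt a a' z) (haz : a z = 0)
    (hb : ContinuousAt b z) :
    HasFDerivAt (fun y => B (a y) (b y)) ((B.flip (b z)).comp a') z := by
  have linear := (B.flip (b z)).hasFDerivAt.comp z ha
  have error : HasFDerivAt (fun y => B (a y) (b y - b z)) (0 : E →L[ℝ] H) z := by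
    refine .of_isLittleO ?_
    have a_isBigO : a =O[nhds z] fun y => y - z := by simpa [haz] using ha.isBigO_sub
    have b_isLittleO : (fun y => b y - b z) =o[nhds z] fun _ => (1 : ℝ) := by
      rw [Asymptotics.isLittleO_one_iff]
      simpa using hb.tendsto.sub_const (b z)
    simp only [haz, map_zero, _root_.zero_apply, sub_zero]
    refine (Asymptotics.IsBigO.of_bound ‖B‖ (.of_forall fun y => ?_)).trans_isLittleO
      (a_isBigO.norm_norm.mul_isLittleO b_isLittleO.norm_norm) |>.trans_isBigO ?_
    · simpa [mul_assoc] using B.le_opNorm₂ (a y) (b y - b z)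
    · simpa using (Asymptotics.isBigO_refl (fun y => y - z) (nhds z)).norm_left
  refine ((linear.add error).congr_fderiv (add_zero _)).congr_of_eventuallyEq
    (.of_forall fun y => ?_)
  simp

section Conformal

open Laplacian

variable {F : Type*} [NormedAddCommGroup F] [InnerProductSpace ℝ F] {U : Set E2} {l : E2 → ℝ}
  {u : E2 → F} {x : E2}

/-- The map `u` is of class `C²` on `U` and induces there the metric `l |dx|²`. -/
structure IsConformalImmersion (U : Set E2) (l : E2 → ℝ) (u : E2 → F) : Prop where
  contDiffOn : ContDiffOn ℝ 2 u U
  inner_pderiv : ∀ x ∈ U, ∀ i j,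
    inner ℝ (pderiv i u x) (pderiv j u x) = if i = j then l x else 0

namespace IsConformalImmersion

theorem mono {V : Set E2} (h : IsConformalImmersion U l u) (hV : V ⊆ U) :
    IsConformalImmersion V l u :=
  ⟨h.contDiffOn.mono hV, fun x hx => h.inner_pderiv x (hV hx)⟩

theorem inner_pderiv₂_add (h : IsConformalImmersion U l u) (hU : IsOpen U) (hx : x ∈ U)
    (i j k : Fin 2) :
    inner ℝ (pderiv₂ i j u x) (pderiv k u x) + inner ℝ (pderiv₂ i k u x) (pderiv j u x) =
      if j = k then pderiv i l x else 0 := by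
  have metric : (fun y => inner ℝ (pderiv j u y) (pderiv k u y)) =ᶠ[nhds x]
      if j = k then l else 0 := by
    filter_upwards [hU.mem_nhds hx] with y hy
    rw [h.inner_pderiv y hy]
    split_ifs <;> rfl
  have product_rule := ((hasFDerivAt_pderiv h.contDiffOn hU hx j).inner ℝ
    (hasFDerivAt_pderiv h.contDiffOn hU hx k)).fderiv
  rw [metric.fderiv_eq] at product_rule
  have := congrArg (fun A => A (EuclideanSpace.single i 1)) product_rule
  split_ifs at this ⊢ <;>
    simpa [pderiv, pderiv₂, real_inner_comm, add_comm] using this.symm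

theorem inner_pderiv₂ (h : IsConformalImmersion U l u) (hU : IsOpen U) (hx : x ∈ U)
    (i j k : Fin 2) :
    inner ℝ (pderiv₂ i j u x) (pderiv k u x) =
      ((if j = k then pderiv i l x else 0) + (if i = k then pderiv j l x else 0) -
        if i = j then pderiv k l x else 0) / 2 := by
  have hi := h.inner_pderiv₂_add hU hx i j k
  have hj := h.inner_pderiv₂_add hU hx j i k
  have hk := h.inner_pderiv₂_add hU hx k i j
  rw [pderiv₂_comm h.contDiffOn hU hx j i] at hj
  rw [pderiv₂_comm h.contDiffOn hU hx k i, pderiv₂_comm h.contDiffOn hU hx k j] at hk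
  linarith

-- The third derivatives in the classical proof do not exist: instead, the mixed derivatives of
-- `y ↦ ⟪∂₁u(x), ∂₀u(y)⟫` at `x` are compared.
theorem gauss (h : IsConformalImmersion U l u) (hU : IsOpen U) (hl : ContDiffOn ℝ 2 l U)
    (hx : x ∈ U) :
    inner ℝ (pderiv₂ 0 0 u x) (pderiv₂ 1 1 u x) - inner ℝ (pderiv₂ 0 1 u x) (pderiv₂ 0 1 u x) =
      -Δ l x / 2 := by
  have hu := h.contDiffOn
  let c : Fin 2 → E2 → ℝ := ![fun y => -(1 / 2) * pderiv 1 l y, fun y => 1 / 2 * pderiv 0 l y]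
  have partials : ∀ᶠ y in nhds x,
      DifferentiableAt ℝ (fun y => inner ℝ (pderiv 1 u x) (pderiv 0 u y)) y ∧
        ∀ i, pderiv i (fun y => inner ℝ (pderiv 1 u x) (pderiv 0 u y)) y =
          innerSL ℝ (pderiv 1 u x - pderiv 1 u y) (pderiv₂ i 0 u y) + c i y := by
    filter_upwards [hU.mem_nhds hx] with y hy
    have deriv := (hasFDerivAt_const (pderiv 1 u x) y).inner ℝ (hasFDerivAt_pderiv hu hU hy 0)
    refine ⟨deriv.differentiableAt, fun i => ?_⟩
    have koszul : inner ℝ (pderiv 1 u y) (pderiv₂ i 0 u y) = c i y := by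
      rw [real_inner_comm, h.inner_pderiv₂ hU hy]
      fin_cases i <;>
        simp only [c, Fin.zero_eta, Fin.mk_one, zero_ne_one, one_ne_zero, ↓reduceIte, cons_val] <;>
        ring
    rw [pderiv, deriv.fderiv, ← koszul, innerSL_apply_apply, inner_sub_left, sub_add_cancel]
    simp [pderiv₂]
  let c' : Fin 2 → E2 →L[ℝ] ℝ :=
    ![-(1 / 2 : ℝ) • (fderiv ℝ (fderiv ℝ l) x).flip (EuclideanSpace.single 1 1),
      (1 / 2 : ℝ) • (fderiv ℝ (fderiv ℝ l) x).flip (EuclideanSpace.single 0 1)]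
  have deriv_c : ∀ i, HasFDerivAt (c i) (c' i) x := Fin.forall_fin_two.2
    ⟨(hasFDerivAt_pderiv hl hU hx 1).const_mul _, (hasFDerivAt_pderiv hl hU hx 0).const_mul _⟩
  have deriv_a (i) := (hasFDerivAt_bilinear_of_eq_zero (innerSL ℝ)
    ((hasFDerivAt_pderiv hu hU hx 1).const_sub (pderiv 1 u x)) (sub_self _)
    (continuousAt_pderiv₂ hu hU hx i 0)).add (deriv_c i)
  have symm := mixed_deriv_eq partials deriv_a 0 1
  simp only [_root_.add_apply, ContinuousLinearMap.comp_apply, ContinuousLinearMap.flip_apply,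
    _root_.neg_apply] at symm
  rw [innerSL_apply_apply, innerSL_apply_apply, inner_neg_left, inner_neg_left] at symm
  change -inner ℝ (pderiv₂ 0 1 u x) (pderiv₂ 1 0 u x) + 1 / 2 * pderiv₂ 0 0 l x =
    -inner ℝ (pderiv₂ 1 1 u x) (pderiv₂ 0 0 u x) + -(1 / 2) * pderiv₂ 1 1 l x at symm
  rw [pderiv₂_comm hu hU hx 1 0, real_inner_comm (pderiv₂ 0 0 u x)] at symm
  rw [laplacian_eq_sum_pderiv₂, Fin.sum_univ_two]
  linarith

end IsConformalImmersion

end Conformal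

/-- The triple product `⟪a, b × c⟫`. -/
def tripleProduct (a b c : EuclideanSpace ℝ (Fin 3)) : ℝ := Matrix.det (of ![⇑a, ⇑b, ⇑c])

theorem tripleProduct_mul_tripleProduct {l : ℝ} {b c : EuclideanSpace ℝ (Fin 3)}
    (hbb : inner ℝ b b = l) (hcc : inner ℝ c c = l) (hbc : inner ℝ b c = 0)
    (a a' : EuclideanSpace ℝ (Fin 3)) :
    tripleProduct a b c * tripleProduct a' b c = l ^ 2 * inner ℝ a a' -
      l * (inner ℝ a b * inner ℝ a' b + inner ℝ a c * inner ℝ a' c) := by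
  have gram : of ![⇑a, ⇑b, ⇑c] * (of ![⇑a', ⇑b, ⇑c])ᵀ =
      !![inner ℝ a a', inner ℝ a b, inner ℝ a c;
        inner ℝ a' b, inner ℝ b b, inner ℝ b c;
        inner ℝ a' c, inner ℝ b c, inner ℝ c c] := by
    ext i j
    fin_cases i <;> fin_cases j <;>
      simp [Matrix.mul_apply, PiLp.inner_apply, Fin.sum_univ_three, mul_comm,
        -inner_self_eq_norm_sq_to_K]
  rw [tripleProduct, tripleProduct, ← Matrix.det_transpose (of ![⇑a', _, _]), ← Matrix.det_mul,
    gram, hbb, hcc, hbc, Matrix.det_fin_three]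
  simp only [of_apply, cons_val', cons_val, mul_zero, sub_zero, zero_mul, add_zero]
  ring

/-- The exterior product of two covectors of the plane. -/
def wedge (a b : E2 →L[ℝ] ℝ) : ℝ :=
  a (EuclideanSpace.single 0 1) * b (EuclideanSpace.single 1 1) -
    a (EuclideanSpace.single 1 1) * b (EuclideanSpace.single 0 1)

theorem eq_wedge_smul_add {a b : E2 →L[ℝ] ℝ} (h : wedge a b ≠ 0) (φ : E2 →L[ℝ] ℝ) :
    φ = (wedge φ b / wedge a b) • a + (wedge a φ / wedge a b) • b := by
  refine clm_ext_single (Fin.forall_fin_two.2 ⟨?_, ?_⟩) <;>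
  · simp only [_root_.add_apply, _root_.smul_apply, smul_eq_mul]
    field_simp
    simp only [wedge]
    ring

/-- The Jacobian determinant of the pair `(f, g)`, that is, the coefficient of `df ∧ dg`. -/
def jacobian (f g : E2 → ℝ) (x : E2) : ℝ := wedge (fderiv ℝ f x) (fderiv ℝ g x)

theorem jacobian_eq (f g : E2 → ℝ) (x : E2) :
    jacobian f g x = pderiv 0 f x * pderiv 1 g x - pderiv 1 f x * pderiv 0 g x :=
  rfl

theorem jacobian_neg_right (f g : E2 → ℝ) (x : E2) : jacobian f (-g) x = -jacobian f g x := by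
  simp only [jacobian, wedge, fderiv_neg, _root_.neg_apply]
  ring

theorem jacobian_neg_left (f g : E2 → ℝ) (x : E2) : jacobian (-f) g x = -jacobian f g x := by
  simp only [jacobian, wedge, fderiv_neg, _root_.neg_apply]
  ring

theorem continuousOn_jacobian {U : Set E2} {f g : E2 → ℝ} (hU : IsOpen U)
    (hf : ContDiffOn ℝ 1 f U) (hg : ContDiffOn ℝ 1 g U) : ContinuousOn (jacobian f g) U := by
  have partials {f : E2 → ℝ} (hf : ContDiffOn ℝ 1 f U) (i) : ContinuousOn (pderiv i f) U :=
    (hf.continuousOn_fderiv_of_isOpen hU le_rfl).clm_apply continuousOn_const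
  exact ((partials hf 0).mul (partials hg 1)).sub ((partials hf 1).mul (partials hg 0))

theorem contDiffOn_jacobian {U : Set E2} {f g : E2 → ℝ} (hU : IsOpen U)
    (hf : ContDiffOn ℝ 2 f U) (hg : ContDiffOn ℝ 2 g U) : ContDiffOn ℝ 1 (jacobian f g) U :=
  ((contDiffOn_pderiv hf hU 0).mul (contDiffOn_pderiv hg hU 1)).sub
    ((contDiffOn_pderiv hf hU 1).mul (contDiffOn_pderiv hg hU 0))

section SecondFundamentalForm

open Laplacian

/-- The number `l⁴ K`, where `K` is the Gauss curvature of the metric `l |dx|²`. -/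
def conformalCurvature (l : E2 → ℝ) (x : E2) : ℝ :=
  (l x * ∑ i, pderiv i l x ^ 2 - l x ^ 2 * Δ l x) / 2

/-- The coefficient `⟪∂ᵢ∂ⱼu, ∂₀u × ∂₁u⟫` of the second fundamental form of `u`, with respect to the
unnormalised normal. -/
def secondForm (u : E2 → EuclideanSpace ℝ (Fin 3)) (x : E2) (i j : Fin 2) : ℝ :=
  tripleProduct (pderiv₂ i j u x) (pderiv 0 u x) (pderiv 1 u x)

variable {U : Set E2} {l : E2 → ℝ} {u : E2 → EuclideanSpace ℝ (Fin 3)} {x : E2}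

theorem pderiv_component (hu : DifferentiableAt ℝ u x) (i : Fin 2) (m : Fin 3) :
    pderiv i (fun y => u y m) x = pderiv i u x m :=
  congrArg (fun A => A (EuclideanSpace.single i 1))
    ((EuclideanSpace.proj (𝕜 := ℝ) m).hasFDerivAt.comp x hu.hasFDerivAt).fderiv

theorem contDiffOn_component {n : WithTop ℕ∞} (hu : ContDiffOn ℝ n u U) (m : Fin 3) :
    ContDiffOn ℝ n (fun x => u x m) U :=
  (EuclideanSpace.proj (𝕜 := ℝ) m).contDiff.comp_contDiffOn hu

theorem pderiv₂_component (hu : ContDiffOn ℝ 2 u U) (hU : IsOpen U) (hx : x ∈ U) (i j : Fin 2)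
    (m : Fin 3) : pderiv₂ i j (fun y => u y m) x = pderiv₂ i j u x m := by
  have partials : pderiv j (fun y => u y m) =ᶠ[nhds x] fun y => pderiv j u y m := by
    filter_upwards [hU.mem_nhds hx] with y hy
    exact pderiv_component ((hu.differentiableOn two_ne_zero).differentiableAt (hU.mem_nhds hy)) j m
  rw [← pderiv_pderiv (contDiffOn_component hu m) hU hx, ← pderiv_pderiv hu hU hx,
    ← pderiv_component (hasFDerivAt_pderiv hu hU hx j).differentiableAt, pderiv, partials.fderiv_eq]
  rfl

theorem secondForm_eq (hu : ContDiffOn ℝ 2 u U) (hU : IsOpen U) (hx : x ∈ U) (i j : Fin 2)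
    (m : Fin 3) : secondForm u x i j =
      pderiv₂ i j (fun y => u y m) x * jacobian (fun y => u y (m + 1)) (fun y => u y (m + 2)) x +
      pderiv₂ i j (fun y => u y (m + 1)) x * jacobian (fun y => u y (m + 2)) (fun y => u y m) x +
      pderiv₂ i j (fun y => u y (m + 2)) x *
        jacobian (fun y => u y m) (fun y => u y (m + 1)) x := by
  have diff := (hu.differentiableOn two_ne_zero).differentiableAt (hU.mem_nhds hx)
  simp only [jacobian_eq, pderiv_component diff, pderiv₂_component hu hU hx, secondForm,
    tripleProduct, Matrix.det_fin_three]
  fin_cases m <;>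
    simp only [of_apply, cons_val', cons_val, Fin.zero_eta, Fin.mk_one, Fin.reduceFinMk,
      Fin.reduceAdd, zero_add] <;>
    ring

namespace IsConformalImmersion

theorem det_secondForm (h : IsConformalImmersion U l u) (hU : IsOpen U) (hl : ContDiffOn ℝ 2 l U)
    (hx : x ∈ U) : secondForm u x 0 0 * secondForm u x 1 1 -
      secondForm u x 0 1 * secondForm u x 1 0 = conformalCurvature l x := by
  have metric := h.inner_pderiv x hx
  have product := tripleProduct_mul_tripleProduct (metric 0 0) (metric 1 1) (metric 0 1)
  have gauss := h.gauss hU hl hx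
  simp only [secondForm, product, pderiv₂_comm h.contDiffOn hU hx 1 0, h.inner_pderiv₂ hU hx,
    conformalCurvature, Fin.sum_univ_two, if_true, one_ne_zero, zero_ne_one, if_false]
  linear_combination l x ^ 2 * gauss

theorem exists_jacobian_ne_zero (h : IsConformalImmersion U l u) (hU : IsOpen U) (hx : x ∈ U)
    (hl : l x ≠ 0) :
    ∃ m : Fin 3, jacobian (fun y => u y (m + 1)) (fun y => u y (m + 2)) x ≠ 0 := by
  by_contra! vanish
  have diff := (h.contDiffOn.differentiableOn two_ne_zero).differentiableAt (hU.mem_nhds hx)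
  have metric (i j) : pderiv i u x 0 * pderiv j u x 0 + pderiv i u x 1 * pderiv j u x 1 +
      pderiv i u x 2 * pderiv j u x 2 = if i = j then l x else 0 := by
    rw [← h.inner_pderiv x hx, real_inner_comm, PiLp.inner_apply, Fin.sum_univ_three]
    rfl
  have lagrange (a b : EuclideanSpace ℝ (Fin 3)) :
      (a 0 * a 0 + a 1 * a 1 + a 2 * a 2) * (b 0 * b 0 + b 1 * b 1 + b 2 * b 2) =
        ∑ m : Fin 3, (a (m + 1) * b (m + 2) - b (m + 1) * a (m + 2)) ^ 2 +
          (a 0 * b 0 + a 1 * b 1 + a 2 * b 2) ^ 2 := by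
    simp only [Fin.sum_univ_three, Fin.reduceAdd]
    ring
  simp only [jacobian_eq, pderiv_component diff] at vanish
  refine hl ?_
  simpa [metric, vanish] using lagrange (pderiv 0 u x) (pderiv 1 u x)

end IsConformalImmersion

end SecondFundamentalForm

/-! ### Graphs -/

section Graph

variable {U V : Set E2} {k X Y Z s p : E2 → ℝ} {x : E2}

theorem pderiv₂_of_fderiv_eq (hX : ContDiffOn ℝ 2 X U) (hY : ContDiffOn ℝ 2 Y U)
    (hZ : ContDiffOn ℝ 2 Z U) (hs : ContDiffOn ℝ 1 s U) (hp : ContDiffOn ℝ 1 p U)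
    (hU : IsOpen U) (fderiv_Z : ∀ x ∈ U, fderiv ℝ Z x = s x • fderiv ℝ X x + p x • fderiv ℝ Y x)
    (hx : x ∈ U) (i j : Fin 2) :
    pderiv₂ i j Z x = s x * pderiv₂ i j X x + pderiv j X x * pderiv i s x +
      (p x * pderiv₂ i j Y x + pderiv j Y x * pderiv i p x) := by
  have partials : pderiv j Z =ᶠ[nhds x] s * pderiv j X + p * pderiv j Y := by
    filter_upwards [hU.mem_nhds hx] with y hy
    rw [pderiv, fderiv_Z y hy]
    rfl
  rw [← pderiv_pderiv hZ hU hx, pderiv, partials.fderiv_eq,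
    (((hasFDerivAt_of_contDiffOn hs hU hx).mul (hasFDerivAt_pderiv hX hU hx j)).add
      ((hasFDerivAt_of_contDiffOn hp hU hx).mul (hasFDerivAt_pderiv hY hU hx j))).fderiv]
  rfl

/-- A surface described over the open set `U` as a graph `Z` over the `(X, Y)`-plane, with slopes
`dZ = s dX + p dY`. The function `k` is the curvature in the normalisation of
`conformalCurvature`. -/
structure IsGraph (U : Set E2) (k X Y Z s p : E2 → ℝ) : Prop where
  isOpen : IsOpen U
  contDiffOn_fst : ContDiffOn ℝ 2 X U
  contDiffOn_snd : ContDiffOn ℝ 2 Y U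
  contDiffOn_height : ContDiffOn ℝ 2 Z U
  contDiffOn_slope_fst : ContDiffOn ℝ 1 s U
  contDiffOn_slope_snd : ContDiffOn ℝ 1 p U
  fderiv_height : ∀ x ∈ U, fderiv ℝ Z x = s x • fderiv ℝ X x + p x • fderiv ℝ Y x
  jacobian_ne_zero : ∀ x ∈ U, jacobian X Y x ≠ 0
  curvature : ∀ x ∈ U, jacobian X Y x ^ 3 * jacobian s p x = k x

namespace IsGraph

theorem neg (h : IsGraph U k X Y Z s p) : IsGraph U k X Y (-Z) (-s) (-p) where
  __ := h
  contDiffOn_height := h.contDiffOn_height.neg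
  contDiffOn_slope_fst := h.contDiffOn_slope_fst.neg
  contDiffOn_slope_snd := h.contDiffOn_slope_snd.neg
  fderiv_height x hx := by
    rw [fderiv_neg, h.fderiv_height x hx]
    simp only [Pi.neg_apply]
    module
  curvature x hx := by rw [jacobian_neg_left, jacobian_neg_right, neg_neg, h.curvature x hx]

theorem mono (h : IsGraph U k X Y Z s p) (hV : IsOpen V) (hVU : V ⊆ U) :
    IsGraph V k X Y Z s p where
  isOpen := hV
  contDiffOn_fst := h.contDiffOn_fst.mono hVU
  contDiffOn_snd := h.contDiffOn_snd.mono hVU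
  contDiffOn_height := h.contDiffOn_height.mono hVU
  contDiffOn_slope_fst := h.contDiffOn_slope_fst.mono hVU
  contDiffOn_slope_snd := h.contDiffOn_slope_snd.mono hVU
  fderiv_height x hx := h.fderiv_height x (hVU hx)
  jacobian_ne_zero x hx := h.jacobian_ne_zero x (hVU hx)
  curvature x hx := h.curvature x (hVU hx)

theorem jacobian_slopes (h : IsGraph U k X Y Z s p) (hx : x ∈ U) :
    jacobian s X x + jacobian p Y x = 0 := by
  have symm_X := pderiv₂_comm h.contDiffOn_fst h.isOpen hx 0 1
  have symm_Y := pderiv₂_comm h.contDiffOn_snd h.isOpen hx 0 1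
  have symm_Z := pderiv₂_comm h.contDiffOn_height h.isOpen hx 0 1
  have hessian_Z := pderiv₂_of_fderiv_eq h.contDiffOn_fst h.contDiffOn_snd h.contDiffOn_height
    h.contDiffOn_slope_fst h.contDiffOn_slope_snd h.isOpen h.fderiv_height hx
  rw [hessian_Z, hessian_Z] at symm_Z
  simp only [jacobian_eq]
  linear_combination symm_Z - s x * symm_X - p x * symm_Y

end IsGraph

theorem IsConformalImmersion.isGraph {l : E2 → ℝ} {u : E2 → EuclideanSpace ℝ (Fin 3)}
    (h : IsConformalImmersion U l u) (hU : IsOpen U) (hl : ContDiffOn ℝ 2 l U) (m : Fin 3)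
    (hD : ∀ x ∈ U, jacobian (fun y => u y (m + 1)) (fun y => u y (m + 2)) x ≠ 0) :
    ∃ s p, IsGraph U (conformalCurvature l) (fun y => u y (m + 1)) (fun y => u y (m + 2))
      (fun y => u y m) s p := by
  let Z := fun y => u y m
  let X := fun y => u y (m + 1)
  let Y := fun y => u y (m + 2)
  have hX : ContDiffOn ℝ 2 X U := contDiffOn_component h.contDiffOn _
  have hY : ContDiffOn ℝ 2 Y U := contDiffOn_component h.contDiffOn _
  have hZ : ContDiffOn ℝ 2 Z U := contDiffOn_component h.contDiffOn _
  let s x := jacobian Z Y x / jacobian X Y x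
  let p x := jacobian X Z x / jacobian X Y x
  have hs : ContDiffOn ℝ 1 s U :=
    (contDiffOn_jacobian hU hZ hY).div (contDiffOn_jacobian hU hX hY) hD
  have hp : ContDiffOn ℝ 1 p U :=
    (contDiffOn_jacobian hU hX hZ).div (contDiffOn_jacobian hU hX hY) hD
  have fderiv_Z (x) (hx : x ∈ U) : fderiv ℝ Z x = s x • fderiv ℝ X x + p x • fderiv ℝ Y x :=
    eq_wedge_smul_add (hD x hx) _
  refine ⟨s, p, hU, hX, hY, hZ, hs, hp, fderiv_Z, hD, fun x hx => ?_⟩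
  have secondForm_u (i j) : secondForm u x i j =
      jacobian X Y x * (pderiv j X x * pderiv i s x + pderiv j Y x * pderiv i p x) := by
    have slope_s : s x * jacobian X Y x = jacobian Z Y x := div_mul_cancel₀ _ (hD x hx)
    have slope_p : p x * jacobian X Y x = jacobian X Z x := div_mul_cancel₀ _ (hD x hx)
    rw [secondForm_eq h.contDiffOn hU hx i j m,
      pderiv₂_of_fderiv_eq hX hY hZ hs hp hU fderiv_Z hx]
    simp only [jacobian_eq] at slope_s slope_p ⊢
    linear_combination pderiv₂ i j X x * slope_s + pderiv₂ i j Y x * slope_p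
  rw [← h.det_secondForm hU hl hx]
  simp only [secondForm_u, jacobian_eq]
  ring

end Graph

/-! ### Cone bounds and the partial Legendre transform -/

section ConeBound

open Filter Asymptotics

theorem tangent_le_of_convexOn {s : Set ℝ} {f : ℝ → ℝ} {m x y : ℝ} (hf : ConvexOn ℝ s f)
    (hx : x ∈ s) (hy : y ∈ s) (hm : HasDerivAt f m x) : m * (y - x) ≤ f y - f x := by
  rcases lt_trichotomy x y with hxy | rfl | hyx
  · have := hf.le_slope_of_hasDerivAt hx hy hxy hm
    rwa [slope_def_field, le_div_iff₀ (sub_pos.2 hxy)] at this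
  · simp
  · have := hf.slope_le_of_hasDerivAt hy hx hyx hm
    rw [slope_def_field, div_le_iff₀ (sub_pos.2 hyx)] at this
    linarith

theorem mul_sub_le_sub_of_deriv_ge {σ σ' : ℝ → ℝ} {x y m : ℝ} (hxy : x ≤ y)
    (hσ : ∀ z ∈ Icc x y, HasDerivAt σ (σ' z) z) (hm : ∀ z ∈ Icc x y, m ≤ σ' z) :
    m * (y - x) ≤ σ y - σ x :=
  (convex_Icc x y).mul_sub_le_image_sub_of_le_deriv
    (fun z hz => (hσ z hz).continuousAt.continuousWithinAt)
    (fun z hz => (hσ z (interior_subset hz)).differentiableAt.differentiableWithinAt)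
    (fun z hz => (hσ z (interior_subset hz)).deriv ▸ hm z (interior_subset hz))
    x (left_mem_Icc.2 hxy) y (right_mem_Icc.2 hxy) hxy

theorem le_second_difference_of_deriv₂_ge {v σ σ' : ℝ → ℝ} {x₀ r a h m : ℝ}
    (hv : ∀ x ∈ ball x₀ r, HasDerivAt v (σ x) x) (hσ : ∀ x ∈ ball x₀ r, HasDerivAt σ (σ' x) x)
    (hσ' : ∀ x ∈ ball x₀ r, 0 ≤ σ' x) (hm : ∀ x ∈ Icc x₀ (x₀ + h), m ≤ σ' x)
    (h_nonneg : 0 ≤ h) (hha : h ≤ a) (har : a < r) :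
    (a - h) * (m * h) ≤ v (x₀ + a) + v (x₀ - a) - 2 * v x₀ := by
  have mem {d : ℝ} (hd : |d| ≤ a) : x₀ + d ∈ ball x₀ r := by
    simpa [Real.dist_eq] using hd.trans_lt har
  have hx₀ : x₀ ∈ ball x₀ r := by simpa using mem (d := 0) (by simpa using h_nonneg.trans hha)
  have hx_add : x₀ + a ∈ ball x₀ r := mem (abs_of_nonneg (h_nonneg.trans hha)).le
  have hx_sub : x₀ - a ∈ ball x₀ r := mem (by rw [abs_neg, abs_of_nonneg (h_nonneg.trans hha)])
  have hx_h : x₀ + h ∈ ball x₀ r := mem (by rwa [abs_of_nonneg h_nonneg])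
  have convex : ConvexOn ℝ (ball x₀ r) v := by
    refine convexOn_of_hasDerivWithinAt2_nonneg (f' := σ) (f'' := σ') (convex_ball x₀ r)
      (fun x hx => (hv x hx).continuousAt.continuousWithinAt) ?_ ?_ ?_ <;>
      rw [isOpen_ball.interior_eq]
    exacts [fun x hx => (hv x hx).hasDerivWithinAt, fun x hx => (hσ x hx).hasDerivWithinAt, hσ']
  have slope_gain : m * h ≤ σ (x₀ + h) - σ x₀ := by
    have hsub : Icc x₀ (x₀ + h) ⊆ ball x₀ r := (convex_ball x₀ r).ordConnected.out hx₀ hx_h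
    simpa using mul_sub_le_sub_of_deriv_ge (le_add_of_nonneg_right h_nonneg)
      (fun x hx => hσ x (hsub hx)) hm
  have tangent_add := tangent_le_of_convexOn convex hx_h hx_add (hv _ hx_h)
  have tangent_h := tangent_le_of_convexOn convex hx₀ hx_h (hv _ hx₀)
  have tangent_sub := tangent_le_of_convexOn convex hx₀ hx_sub (hv _ hx₀)
  have := mul_le_mul_of_nonneg_left slope_gain (sub_nonneg.2 hha)
  linarith

theorem second_difference_eq_zero_of_deriv₂_eq_zero {v σ σ' : ℝ → ℝ} {x₀ r a : ℝ}
    (hv : ∀ x ∈ ball x₀ r, HasDerivAt v (σ x) x) (hσ : ∀ x ∈ ball x₀ r, HasDerivAt σ (σ' x) x)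
    (hσ' : ∀ x ∈ ball x₀ r, σ' x = 0) (ha : 0 ≤ a) (har : a < r) :
    v (x₀ + a) + v (x₀ - a) - 2 * v x₀ = 0 := by
  have hx₀ : x₀ ∈ ball x₀ r := mem_ball_self (ha.trans_lt har)
  have nonneg := le_second_difference_of_deriv₂_ge hv hσ (fun x hx => (hσ' x hx).ge) (h := 0)
    (m := 0) (by simp [hσ' x₀ hx₀]) le_rfl ha har
  have nonpos := le_second_difference_of_deriv₂_ge (fun x hx => (hv x hx).neg)
    (fun x hx => (hσ x hx).neg) (fun x hx => by simp [hσ' x hx]) (h := 0)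
    (m := 0) (by simp [hσ' x₀ hx₀]) le_rfl ha har
  simp only [Pi.neg_apply] at nonpos
  linarith

theorem le_second_difference_of_cone_bound {v σ σ' : ℝ → ℝ} {x₀ r a b c δ : ℝ}
    (hv : ∀ x ∈ ball x₀ r, HasDerivAt v (σ x) x) (hσ : ∀ x ∈ ball x₀ r, HasDerivAt σ (σ' x) x)
    (hσ' : ∀ x ∈ ball x₀ r, 0 ≤ σ' x) (hcone : ∀ x ∈ ball x₀ r, |x - x₀| ≤ b * δ → c * δ ≤ σ' x)
    (hc : 0 ≤ c) (hb : 0 ≤ b) (hδ : 0 ≤ δ) (hbδ : b * δ ≤ a / 2) (har : a < r) :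
    a / 2 * (c * b) * δ ^ 2 ≤ v (x₀ + a) + v (x₀ - a) - 2 * v x₀ := by
  have hbδ_nonneg : 0 ≤ b * δ := mul_nonneg hb hδ
  have deriv₂_ge : ∀ x ∈ Icc x₀ (x₀ + b * δ), c * δ ≤ σ' x := fun x hx => by
    have hx_dist : |x - x₀| ≤ b * δ := by
      rw [abs_of_nonneg (sub_nonneg.2 hx.1)]
      linarith [hx.2]
    exact hcone x (by rw [mem_ball, Real.dist_eq]; linarith) hx_dist
  refine le_trans ?_ (le_second_difference_of_deriv₂_ge hv hσ hσ' deriv₂_ge hbδ_nonneg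
    (by linarith) har)
  have : 0 ≤ (a / 2 - b * δ) * (c * δ * (b * δ)) :=
    mul_nonneg (sub_nonneg.2 hbδ) (by positivity)
  linarith

theorem deriv_eq_zero_of_eventually_eq_zero {f : ℝ → ℝ} {f' t : ℝ} {s : Set ℝ}
    (hs : UniqueDiffWithinAt ℝ s t) (ht : t ∈ s) (hf : HasDerivAt f f' t)
    (h0 : ∀ᶠ y in nhdsWithin t s, f y = 0) : f' = 0 :=
  hs.eq_deriv _ hf.hasDerivWithinAt
    ((hasDerivWithinAt_const t s 0).congr_of_eventuallyEq h0 (h0.self_of_nhdsWithin ht))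

theorem isLittleO_sq_of_eventually_eq_zero {T q : ℝ → ℝ} {t₀ r : ℝ} (hr : 0 < r)
    (hT : ∀ t ∈ ball t₀ r, HasDerivAt T (q t) t) (hq : DifferentiableAt ℝ q t₀)
    (h0 : ∀ᶠ t in nhdsWithin t₀ (Ici t₀), T t = 0) : T =o[nhds t₀] fun t => (t - t₀) ^ 2 := by
  have q_eq_zero : ∀ᶠ t in nhdsWithin t₀ (Ici t₀), q t = 0 := by
    filter_upwards [eventually_eventually_nhdsWithin.2 h0, self_mem_nhdsWithin,
      mem_nhdsWithin_of_mem_nhds (ball_mem_nhds t₀ hr)] with t h0t ht htr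
    exact deriv_eq_zero_of_eventually_eq_zero (uniqueDiffOn_Ici t₀ t ht) ht (hT t htr) h0t
  have q_isLittleO := hasDerivAt_iff_isLittleO.1 hq.hasDerivAt
  rw [deriv_eq_zero_of_eventually_eq_zero (uniqueDiffOn_Ici t₀ t₀ self_mem_Ici) self_mem_Ici
    hq.hasDerivAt q_eq_zero, q_eq_zero.self_of_nhdsWithin self_mem_Ici] at q_isLittleO
  have := (convex_ball t₀ r).isLittleO_pow_succ_real (n := 1) (mem_ball_self hr)
    (fun t ht => (hT t ht).hasDerivWithinAt)
    (by simpa using q_isLittleO.mono nhdsWithin_le_nhds)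
  rw [isOpen_ball.nhdsWithin_eq (mem_ball_self hr)] at this
  simpa [h0.self_of_nhdsWithin self_mem_Ici] using this

-- The second difference of `V` in the first variable vanishes for `t ≥ t₀`, hence is
-- `o((t - t₀) ^ 2)`, whereas integrating `S'` over the cone makes it grow quadratically.
theorem false_of_hasDerivAt_of_cone_bound {V S S' Q : ℝ → ℝ → ℝ} {x₀ t₀ r c b : ℝ}
    (hr : 0 < r) (hc : 0 < c) (hb : 0 < b)
    (hV : ∀ x ∈ ball x₀ r, ∀ t ∈ ball t₀ r, HasDerivAt (fun x => V x t) (S x t) x)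
    (hS : ∀ x ∈ ball x₀ r, ∀ t ∈ ball t₀ r, HasDerivAt (fun x => S x t) (S' x t) x)
    (hVt : ∀ x ∈ ball x₀ r, ∀ t ∈ ball t₀ r, HasDerivAt (V x) (Q x t) t)
    (hQ : ∀ x ∈ ball x₀ r, DifferentiableAt ℝ (Q x) t₀)
    (hS'_nonneg : ∀ x ∈ ball x₀ r, ∀ t ∈ ball t₀ r, 0 ≤ S' x t)
    (hS'_zero : ∀ x ∈ ball x₀ r, ∀ t ∈ ball t₀ r, t₀ ≤ t → S' x t = 0)
    (hS'_cone : ∀ x ∈ ball x₀ r, ∀ t ∈ ball t₀ r, t < t₀ → |x - x₀| ≤ b * (t₀ - t) →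
      c * (t₀ - t) ≤ S' x t) : False := by
  let a := r / 2
  have ha : 0 < a := half_pos hr
  have har : a < r := half_lt_self hr
  have hx₀ : x₀ ∈ ball x₀ r := mem_ball_self hr
  have hx_add : x₀ + a ∈ ball x₀ r := by simpa [abs_of_pos ha] using har
  have hx_sub : x₀ - a ∈ ball x₀ r := by simpa [Real.dist_eq, abs_of_pos ha] using har
  let T t := V (x₀ + a) t + V (x₀ - a) t - 2 * V x₀ t
  have T_isLittleO : T =o[nhds t₀] fun t => (t - t₀) ^ 2 := by
    refine isLittleO_sq_of_eventually_eq_zero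
      (q := fun t => Q (x₀ + a) t + Q (x₀ - a) t - 2 * Q x₀ t) hr
      (fun t ht => ((hVt _ hx_add t ht).add (hVt _ hx_sub t ht)).sub ((hVt _ hx₀ t ht).const_mul 2))
      (((hQ _ hx_add).add (hQ _ hx_sub)).sub ((hQ _ hx₀).const_mul 2)) ?_
    filter_upwards [self_mem_nhdsWithin, mem_nhdsWithin_of_mem_nhds (ball_mem_nhds t₀ hr)]
      with t ht htr
    exact second_difference_eq_zero_of_deriv₂_eq_zero (hV · · t htr) (hS · · t htr)
      (hS'_zero · · t htr ht) ha.le har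
  have T_ge : ∀ᶠ t in nhdsWithin t₀ (Iio t₀), a / 2 * (c * b) * (t - t₀) ^ 2 ≤ T t := by
    have : Ioi (t₀ - a / (2 * b)) ∈ nhds t₀ := Ioi_mem_nhds (sub_lt_self _ (by positivity))
    filter_upwards [self_mem_nhdsWithin, mem_nhdsWithin_of_mem_nhds (ball_mem_nhds t₀ hr),
      mem_nhdsWithin_of_mem_nhds this] with t ht htr htb
    rw [mem_Ioi, sub_lt_comm, lt_div_iff₀ (by positivity)] at htb
    rw [← neg_sub t₀ t, neg_sq]
    exact le_second_difference_of_cone_bound (hV · · t htr) (hS · · t htr) (hS'_nonneg · · t htr)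
      (hS'_cone · · t htr ht) hc.le hb.le (sub_pos.2 ht).le (by linarith) har
  obtain ⟨t, hT_ge, hT_le, ht⟩ := (T_ge.and (((T_isLittleO.def (c := a / 4 * (c * b))
    (by positivity)).filter_mono nhdsWithin_le_nhds).and self_mem_nhdsWithin)).exists
  have : 0 < a / 4 * (c * b) * (t - t₀) ^ 2 :=
    mul_pos (by positivity) (sq_pos_of_neg (sub_neg.2 ht))
  rw [Real.norm_of_nonneg (sq_nonneg _)] at hT_le
  linarith [(le_abs_self _).trans hT_le]

end ConeBound

section Chart

open Filter Topology Asymptotics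

variable {U : Set E2} {k X Y Z s p f : E2 → ℝ} {z : E2}

theorem exists_equiv_of_wedge_ne_zero {a b : E2 →L[ℝ] ℝ} (h : wedge a b ≠ 0) :
    ∃ L : E2 ≃L[ℝ] ℝ × ℝ, (L : E2 →L[ℝ] ℝ × ℝ) = a.prod b := by
  have injective : Function.Injective (a.prod b : E2 →ₗ[ℝ] ℝ × ℝ) := by
    rw [injective_iff_map_eq_zero]
    intro v hv
    obtain ⟨ha, hb⟩ : a v = 0 ∧ b v = 0 := Prod.ext_iff.1 hv
    ext i
    change EuclideanSpace.proj (𝕜 := ℝ) i v = 0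
    rw [eq_wedge_smul_add h (EuclideanSpace.proj i)]
    simp [ha, hb]
  exact ⟨(LinearMap.linearEquivOfInjective _ injective (by simp)).toContinuousLinearEquiv, rfl⟩

theorem hasFDerivAt_wedge_smul_add (hf : DifferentiableAt ℝ f z) (hJ : jacobian X p z ≠ 0) :
    HasFDerivAt f ((jacobian f p z / jacobian X p z) • fderiv ℝ X z +
      (jacobian X f z / jacobian X p z) • fderiv ℝ p z) z :=
  hf.hasFDerivAt.congr_fderiv (eq_wedge_smul_add hJ _)

theorem exists_chart (hU : IsOpen U) (hX : ContDiffOn ℝ 1 X U) (hp : ContDiffOn ℝ 1 p U)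
    (hz : z ∈ U) (hJ : jacobian X p z ≠ 0) :
    ∃ e : OpenPartialHomeomorph E2 (ℝ × ℝ),
      z ∈ e.source ∧ e.source ⊆ U ∧ ∀ x, e x = (X x, p x) := by
  obtain ⟨L, hL⟩ := exists_equiv_of_wedge_ne_zero hJ
  have contDiffAt : ContDiffAt ℝ 1 (fun x => (X x, p x)) z :=
    (hX.contDiffAt (hU.mem_nhds hz)).prodMk (hp.contDiffAt (hU.mem_nhds hz))
  have strict : HasStrictFDerivAt (fun x => (X x, p x)) (L : E2 →L[ℝ] ℝ × ℝ) z :=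
    contDiffAt.hasStrictFDerivAt' (hL ▸ (hasFDerivAt_of_contDiffOn hX hU hz).prodMk
      (hasFDerivAt_of_contDiffOn hp hU hz)) one_ne_zero
  refine ⟨(strict.toOpenPartialHomeomorph _).restrOpen U hU,
    ⟨strict.mem_toOpenPartialHomeomorph_source, hz⟩, inter_subset_right, fun x => rfl⟩

theorem hasFDerivAt_comp_chart_symm {e : OpenPartialHomeomorph E2 (ℝ × ℝ)} {y : ℝ × ℝ} {α β : ℝ}
    (he : ∀ x, e x = (X x, p x)) (hy : y ∈ e.target) (hX : DifferentiableAt ℝ X (e.symm y))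
    (hp : DifferentiableAt ℝ p (e.symm y)) (hJ : jacobian X p (e.symm y) ≠ 0)
    (hf : HasFDerivAt f (α • fderiv ℝ X (e.symm y) + β • fderiv ℝ p (e.symm y)) (e.symm y)) :
    HasFDerivAt (fun y => f (e.symm y))
      (α • ContinuousLinearMap.fst ℝ ℝ ℝ + β • ContinuousLinearMap.snd ℝ ℝ ℝ) y := by
  obtain ⟨L, hL⟩ := exists_equiv_of_wedge_ne_zero hJ
  have fderiv_e : HasFDerivAt e (L : E2 →L[ℝ] ℝ × ℝ) (e.symm y) := by
    rw [hL, funext he]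
    exact hX.hasFDerivAt.prodMk hp.hasFDerivAt
  have factor : α • fderiv ℝ X (e.symm y) + β • fderiv ℝ p (e.symm y) =
      (α • ContinuousLinearMap.fst ℝ ℝ ℝ + β • ContinuousLinearMap.snd ℝ ℝ ℝ).comp
        (L : E2 →L[ℝ] ℝ × ℝ) := by
    rw [hL]
    ext v
    simp
  refine (hf.comp y (e.hasFDerivAt_symm hy fderiv_e)).congr_fderiv ?_
  rw [factor]
  ext <;> simp

theorem hasDerivAt_fst_of_hasFDerivAt {F : ℝ × ℝ → ℝ} {α β x t : ℝ}
    (h : HasFDerivAt F (α • ContinuousLinearMap.fst ℝ ℝ ℝ + β • ContinuousLinearMap.snd ℝ ℝ ℝ)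
      (x, t)) : HasDerivAt (fun x => F (x, t)) α x :=
  (h.comp_hasDerivAt x ((hasDerivAt_id x).prodMk (hasDerivAt_const x t))).congr_deriv (by simp)

theorem hasDerivAt_snd_of_hasFDerivAt {F : ℝ × ℝ → ℝ} {α β x t : ℝ}
    (h : HasFDerivAt F (α • ContinuousLinearMap.fst ℝ ℝ ℝ + β • ContinuousLinearMap.snd ℝ ℝ ℝ)
      (x, t)) : HasDerivAt (fun t => F (x, t)) β t :=
  (h.comp_hasDerivAt t ((hasDerivAt_const t x).prodMk (hasDerivAt_id t))).congr_deriv (by simp)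

-- The increments of `(X, p)` control those of the position, since their differentials are
-- independent; in the region considered they are at most `p z - p x`.
theorem eventually_cone_bound {a : ℝ} (ha : 0 < a) (hX : DifferentiableAt ℝ X z)
    (hp : DifferentiableAt ℝ p z) (hJ : jacobian X p z ≠ 0) (hfz : f z = 0)
    (hf : HasFDerivAt f (-a • fderiv ℝ p z) z) :
    ∀ᶠ x in 𝓝 z, |X x - X z| ≤ p z - p x → a / 2 * (p z - p x) ≤ f x := by
  obtain ⟨L, hL⟩ := exists_equiv_of_wedge_ne_zero hJ
  have fderiv_pair : HasFDerivAt (fun x => (X x, p x)) (L : E2 →L[ℝ] ℝ × ℝ) z :=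
    hL ▸ hX.hasFDerivAt.prodMk hp.hasFDerivAt
  have small : (fun x => f x + a * (p x - p z)) =o[𝓝 z] fun x => (X x, p x) - (X z, p z) := by
    have fderiv_zero : HasFDerivAt (fun x => f x + a * (p x - p z)) (0 : E2 →L[ℝ] ℝ) z :=
      (hf.add ((hp.hasFDerivAt.sub_const (p z)).const_mul a)).congr_fderiv (by module)
    refine IsLittleO.trans_isBigO ?_ (fderiv_pair.isTheta_sub L.toHomeomorph.isInducing).2
    simpa [hfz] using fderiv_zero.isLittleO
  filter_upwards [small.def (half_pos ha)] with x hx hcone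
  have norm_pair : ‖(X x, p x) - (X z, p z)‖ = p z - p x := by
    rw [Prod.mk_sub_mk, Prod.norm_mk, Real.norm_eq_abs, Real.norm_eq_abs, abs_sub_comm (p x),
      abs_of_nonneg ((abs_nonneg _).trans hcone), max_eq_right hcone]
  rw [norm_pair, Real.norm_eq_abs] at hx
  linarith [neg_abs_le (f x + a * (p x - p z))]

namespace IsGraph

theorem hasFDerivAt_legendre (h : IsGraph U k X Y Z s p) (hz : z ∈ U) :
    HasFDerivAt (fun x => Z x - p x * Y x) (s z • fderiv ℝ X z + -Y z • fderiv ℝ p z) z := by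
  refine ((hasFDerivAt_of_contDiffOn (h.contDiffOn_height.of_le one_le_two) h.isOpen hz).sub
    ((hasFDerivAt_of_contDiffOn h.contDiffOn_slope_snd h.isOpen hz).mul
      (hasFDerivAt_of_contDiffOn (h.contDiffOn_snd.of_le one_le_two) h.isOpen hz))).congr_fderiv ?_
  rw [h.fderiv_height z hz]
  module

theorem exists_legendre_chart (h : IsGraph U k X Y Z s p) (hJ : ∀ x ∈ U, jacobian X p x ≠ 0)
    (hz : z ∈ U) :
    ∃ θ : ℝ × ℝ → E2, Tendsto θ (𝓝 (X z, p z)) (𝓝 z) ∧ ∀ᶠ y in 𝓝 (X z, p z),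
      (X (θ y), p (θ y)) = y ∧
      HasFDerivAt (fun y => Z (θ y) - p (θ y) * Y (θ y))
        (s (θ y) • ContinuousLinearMap.fst ℝ ℝ ℝ + -Y (θ y) • ContinuousLinearMap.snd ℝ ℝ ℝ) y ∧
      HasFDerivAt (fun y => s (θ y))
        ((jacobian s p (θ y) / jacobian X p (θ y)) • ContinuousLinearMap.fst ℝ ℝ ℝ +
          (jacobian X s (θ y) / jacobian X p (θ y)) • ContinuousLinearMap.snd ℝ ℝ ℝ) y ∧
      DifferentiableAt ℝ (fun y => Y (θ y)) y := by
  have hX := h.contDiffOn_fst.of_le one_le_two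
  have hY := h.contDiffOn_snd.of_le one_le_two
  have hs := h.contDiffOn_slope_fst
  have hp := h.contDiffOn_slope_snd
  have differentiableAt {f : E2 → ℝ} (hf : ContDiffOn ℝ 1 f U) {x} (hx : x ∈ U) :
      DifferentiableAt ℝ f x := (hasFDerivAt_of_contDiffOn hf h.isOpen hx).differentiableAt
  obtain ⟨e, hze, heU, he⟩ := exists_chart h.isOpen hX hp hz (hJ z hz)
  rw [← he z]
  refine ⟨e.symm, e.tendsto_symm hze, ?_⟩
  filter_upwards [e.open_target.mem_nhds (e.map_source hze)] with y hy
  have hyU : e.symm y ∈ U := heU (e.map_target hy)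
  have fderiv_chart {f : E2 → ℝ} {α β : ℝ} (hf : HasFDerivAt f
      (α • fderiv ℝ X (e.symm y) + β • fderiv ℝ p (e.symm y)) (e.symm y)) :=
    hasFDerivAt_comp_chart_symm he hy (differentiableAt hX hyU) (differentiableAt hp hyU)
      (hJ _ hyU) hf
  exact ⟨(he _).symm.trans (e.right_inv hy), fderiv_chart (h.hasFDerivAt_legendre hyU),
    fderiv_chart (hasFDerivAt_wedge_smul_add (differentiableAt hs hyU) (hJ _ hyU)),
    (fderiv_chart (hasFDerivAt_wedge_smul_add (differentiableAt hY hyU)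
      (hJ _ hyU))).differentiableAt⟩

-- In the coordinates `(X, p)` the partial Legendre transform `V = Z - p * Y` satisfies
-- `dV = s dX - Y dp`, so the quotient of Jacobians is its second derivative along `X`.
theorem false_of_cone_bound (h : IsGraph U k X Y Z s p) (hJ : ∀ x ∈ U, jacobian X p x ≠ 0)
    (hz : z ∈ U) {c : ℝ} (hc : 0 < c)
    (hnonneg : ∀ᶠ x in 𝓝 z, 0 ≤ jacobian s p x / jacobian X p x)
    (hzero : ∀ᶠ x in 𝓝 z, p z ≤ p x → jacobian s p x / jacobian X p x = 0)
    (hcone : ∀ᶠ x in 𝓝 z, |X x - X z| ≤ p z - p x →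
      c * (p z - p x) ≤ jacobian s p x / jacobian X p x) : False := by
  obtain ⟨θ, tendsto_θ, hθ⟩ := h.exists_legendre_chart hJ hz
  obtain ⟨r, hr, hball⟩ := Metric.eventually_nhds_iff_ball.1 (hθ.and (tendsto_θ.eventually
    (hnonneg.and (hzero.and hcone))))
  have near {x t} (hx : x ∈ ball (X z) r) (ht : t ∈ ball (p z) r) :=
    hball (x, t) (ball_prod_same (X z) (p z) r ▸ mk_mem_prod hx ht)
  have coordinates {x t} (hx : x ∈ ball (X z) r) (ht : t ∈ ball (p z) r) :
      X (θ (x, t)) = x ∧ p (θ (x, t)) = t := Prod.ext_iff.1 (near hx ht).1.1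
  refine false_of_hasDerivAt_of_cone_bound hr hc one_pos
    (V := fun x t => Z (θ (x, t)) - p (θ (x, t)) * Y (θ (x, t))) (Q := fun x t => -Y (θ (x, t)))
    (fun x hx t ht => hasDerivAt_fst_of_hasFDerivAt (near hx ht).1.2.1)
    (fun x hx t ht => hasDerivAt_fst_of_hasFDerivAt (near hx ht).1.2.2.1)
    (fun x hx t ht => hasDerivAt_snd_of_hasFDerivAt (near hx ht).1.2.1)
    (fun x hx => ((near hx (mem_ball_self hr)).1.2.2.2.comp (p z)
      ((differentiableAt_const x).prodMk differentiableAt_id)).neg)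
    (fun x hx t ht => (near hx ht).2.1)
    (fun x hx t ht h_le => (near hx ht).2.2.1 ((coordinates hx ht).2.symm ▸ h_le))
    (fun x hx t ht _ h_le => ?_)
  have lower := (near hx ht).2.2.2
  rw [(coordinates hx ht).1, (coordinates hx ht).2] at lower
  exact lower (one_mul (p z - t) ▸ h_le)

end IsGraph

end Chart

/-! ### Isolated discs and hubs -/

section BoundaryMaximum

open Filter Topology

theorem exists_pos_smul_innerSL_of_isMaxOn_closedBall {E : Type*} [NormedAddCommGroup E]
    [InnerProductSpace ℝ E] [CompleteSpace E] {f : E → ℝ} {f' : E →L[ℝ] ℝ} {c z : E} {ρ : ℝ}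
    (hρ : 0 < ρ) (hz : z ∈ sphere c ρ) (hf : HasStrictFDerivAt f f' z) (hf' : f' ≠ 0)
    (hmax : IsMaxOn f (closedBall c ρ) z) : ∃ a : ℝ, 0 < a ∧
      f' = a • innerSL ℝ (z - c) := by
  have norm_z : ‖z - c‖ = ρ := mem_sphere_iff_norm.1 hz
  have level_max : IsLocalExtrOn f {x | ‖x - c‖ ^ 2 = ‖z - c‖ ^ 2} z := by
    refine .inr (hmax.on_subset fun x hx => ?_).localize
    rw [mem_closedBall_iff_norm, ← norm_z]
    exact ((pow_left_inj₀ (norm_nonneg _) (norm_nonneg _) two_ne_zero).1 hx).le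
  obtain ⟨a, b, hab, multipliers⟩ := level_max.exists_multipliers_of_hasStrictFDerivAt_1d
    ((hasStrictFDerivAt_norm_sq (z - c)).comp z ((hasStrictFDerivAt_id z).sub_const c)) hf
  have multipliers_apply (v : E) : a * (2 * inner ℝ (z - c) v) + b * f' v = 0 := by
    simpa [two_smul, two_mul, inner_sub_left, mul_add] using DFunLike.congr_fun multipliers v
  have hb : b ≠ 0 := by
    rintro rfl
    have := multipliers_apply (z - c)
    rw [real_inner_self_eq_norm_sq, norm_z, zero_mul, add_zero] at this
    exact hab (by simpa [hρ.ne'] using this)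
  have f'_eq : f' = (-(2 * a) / b) • innerSL ℝ (z - c) := by
    ext v
    rw [_root_.smul_apply, innerSL_apply_apply, smul_eq_mul, div_mul_eq_mul_div, eq_div_iff hb]
    linear_combination multipliers_apply v
  have inward : f' (c - z) ≤ 0 := by
    refine hmax.localize.hasFDerivWithinAt_nonpos hf.hasFDerivAt.hasFDerivWithinAt
      (sub_mem_posTangentConeAt_of_segment_subset ?_)
    exact (convex_closedBall c ρ).segment_subset (sphere_subset_closedBall hz)
      (mem_closedBall_self hρ.le)
  refine ⟨_, lt_of_le_of_ne' ?_ fun h_zero => hf' (by rw [f'_eq, h_zero, zero_smul]), f'_eq⟩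
  rw [← neg_sub z c, map_neg, f'_eq, _root_.smul_apply, innerSL_apply_apply,
    real_inner_self_eq_norm_sq, norm_z, smul_eq_mul, Left.neg_nonpos_iff] at inward
  exact nonneg_of_mul_nonneg_left inward (by positivity)

theorem exists_isMaxOn_closedBall_of_fderiv_ne_zero {E : Type*} [NormedAddCommGroup E]
    [NormedSpace ℝ E] [ProperSpace E] {f : E → ℝ} {c : E} {ρ : ℝ} (hρ : 0 ≤ ρ)
    (hf : ContinuousOn f (closedBall c ρ)) (hf' : ∀ x ∈ ball c ρ, fderiv ℝ f x ≠ 0) :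
    ∃ z ∈ sphere c ρ, IsMaxOn f (closedBall c ρ) z ∧ ∀ x ∈ ball c ρ, f x < f z := by
  obtain ⟨z, hz, hmax⟩ :=
    (isCompact_closedBall c ρ).exists_isMaxOn ⟨c, mem_closedBall_self hρ⟩ hf
  have interior_lt (x) (hx : x ∈ ball c ρ) : f x < f z := by
    refine (hmax (ball_subset_closedBall hx)).lt_of_ne fun h_eq => hf' x hx ?_
    refine IsLocalMax.fderiv_eq_zero ?_
    filter_upwards [isOpen_ball.mem_nhds hx] with y hy
    exact h_eq ▸ hmax (ball_subset_closedBall hy)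
  exact ⟨z, closedBall_sdiff_ball (x := c) ▸ ⟨hz, fun hz' => (interior_lt z hz').false⟩, hmax,
    interior_lt⟩

theorem exists_eventually_cone_bound {X p : E2 → ℝ} {P z : E2} {ρ : ℝ} (hρ : 0 < ρ)
    (hz : z ∈ sphere P ρ) (hX : DifferentiableAt ℝ X z) (hp : ContDiffAt ℝ 1 p z)
    (hJ : jacobian X p z ≠ 0) (hmax : IsMaxOn p (closedBall P ρ) z) :
    ∃ a > 0, ∀ᶠ x in 𝓝 z, |X x - X z| ≤ p z - p x → a * (p z - p x) ≤ ρ ^ 2 - ‖x - P‖ ^ 2 := by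
  have fderiv_p_ne_zero : fderiv ℝ p z ≠ 0 := fun h_zero => hJ (by simp [jacobian, wedge, h_zero])
  obtain ⟨a, ha, fderiv_p⟩ := exists_pos_smul_innerSL_of_isMaxOn_closedBall hρ hz
    (hp.hasStrictFDerivAt one_ne_zero) fderiv_p_ne_zero hmax
  have fderiv_bump : HasFDerivAt (fun x => ρ ^ 2 - ‖x - P‖ ^ 2) (-(2 / a) • fderiv ℝ p z) z := by
    refine ((((hasFDerivAt_id z).sub_const P).norm_sq).const_sub (ρ ^ 2)).congr_fderiv ?_
    ext v
    simp only [id_eq, map_sub, ContinuousLinearMap.comp_id, _root_.neg_apply, _root_.smul_apply,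
      _root_.sub_apply, coe_innerSL_apply, nsmul_eq_mul, Nat.cast_ofNat, fderiv_p, smul_eq_mul]
    field_simp
  exact ⟨2 / a / 2, by positivity, eventually_cone_bound (div_pos two_pos ha) hX
    (hp.differentiableAt one_ne_zero) hJ (by rw [mem_sphere_iff_norm.1 hz, sub_self]) fderiv_bump⟩

namespace IsGraph

variable {U : Set E2} {k X Y Z s p : E2 → ℝ}

theorem div_jacobian_eq (h : IsGraph U k X Y Z s p) {x : E2} (hx : x ∈ U) :
    jacobian s p x / jacobian X p x = k x / (jacobian X Y x ^ 3 * jacobian X p x) := by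
  rw [← h.curvature x hx]
  exact (mul_div_mul_left _ _ (pow_ne_zero 3 (h.jacobian_ne_zero x hx))).symm

theorem continuousOn_jacobian_mul (h : IsGraph U k X Y Z s p) :
    ContinuousOn (fun x => jacobian X Y x ^ 3 * jacobian X p x) U :=
  have hX := h.contDiffOn_fst.of_le one_le_two
  ((continuousOn_jacobian h.isOpen hX (h.contDiffOn_snd.of_le one_le_two)).pow 3).mul
    (continuousOn_jacobian h.isOpen hX h.contDiffOn_slope_snd)

theorem false_of_isolated_disc (h : IsGraph U k X Y Z s p)
    (hJ : ∀ x ∈ U, 0 < jacobian X Y x ^ 3 * jacobian X p x) {P : E2} {ρ c : ℝ} (hρ : 0 < ρ)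
    (hc : 0 < c) (hsub : closedBall P ρ ⊆ U) (hk : ∀ x ∈ U, 0 ≤ k x)
    (hk_lower : ∀ x ∈ U, c * (ρ ^ 2 - ‖x - P‖ ^ 2) ≤ k x)
    (hk_outside : ∀ x ∈ U, x ∈ ball P (2 * ρ) → x ∉ ball P ρ → k x = 0) : False := by
  have hJ' (x) (hx : x ∈ U) : jacobian X p x ≠ 0 := (mul_ne_zero_iff.1 (hJ x hx).ne').2
  have fderiv_p_ne_zero (x) (hx : x ∈ U) : fderiv ℝ p x ≠ 0 := fun h_zero =>
    hJ' x hx (by simp [jacobian, wedge, h_zero])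
  obtain ⟨z, hz, hmax, interior_lt⟩ := exists_isMaxOn_closedBall_of_fderiv_ne_zero hρ.le
    (h.contDiffOn_slope_snd.continuousOn.mono hsub)
    fun x hx => fderiv_p_ne_zero x (hsub (ball_subset_closedBall hx))
  have hzU : z ∈ U := hsub (sphere_subset_closedBall hz)
  have hX : ContDiffOn ℝ 1 X U := h.contDiffOn_fst.of_le one_le_two
  obtain ⟨a, ha, cone_bound⟩ := exists_eventually_cone_bound hρ hz
    (hX.contDiffAt (h.isOpen.mem_nhds hzU) |>.differentiableAt one_ne_zero)
    (h.contDiffOn_slope_snd.contDiffAt (h.isOpen.mem_nhds hzU)) (hJ' z hzU) hmax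
  let M := jacobian X Y z ^ 3 * jacobian X p z + 1
  have hM : 0 < M := add_pos (hJ z hzU) one_pos
  have bound_M : ∀ᶠ x in 𝓝 z, jacobian X Y x ^ 3 * jacobian X p x < M :=
    (h.continuousOn_jacobian_mul.continuousAt (h.isOpen.mem_nhds hzU)).eventually_lt_const
      (lt_add_one _)
  have near_U : ∀ᶠ x in 𝓝 z, x ∈ U := h.isOpen.mem_nhds hzU
  refine h.false_of_cone_bound hJ' hzU (c := c * a / M) (by positivity) ?_ ?_ ?_
  · filter_upwards [near_U] with x hx
    exact h.div_jacobian_eq hx ▸ div_nonneg (hk x hx) (hJ x hx).le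
  · have near_ball : ∀ᶠ x in 𝓝 z, x ∈ ball P (2 * ρ) :=
      isOpen_ball.mem_nhds (mem_ball.2 (by rw [mem_sphere.1 hz]; linarith))
    filter_upwards [near_U, near_ball] with x hx hxP h_le
    rw [h.div_jacobian_eq hx, hk_outside x hx hxP fun hx' => (interior_lt x hx').not_ge h_le,
      zero_div]
  · filter_upwards [near_U, bound_M, cone_bound] with x hx hxM cone h_le
    calc c * a / M * (p z - p x)
        = c * (a * (p z - p x)) / M := by ring
      _ ≤ k x / (jacobian X Y x ^ 3 * jacobian X p x) :=
        div_le_div₀ (hk x hx) ((mul_le_mul_of_nonneg_left (cone h_le) hc.le).trans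
          (hk_lower x hx)) (hJ x hx) hxM.le
      _ = jacobian s p x / jacobian X p x := (h.div_jacobian_eq hx).symm

end IsGraph

end BoundaryMaximum

section Hub

open Filter Topology

theorem eqOn_sphere_of_hasFDerivAt_zero {f : E2 → ℝ} {c : E2} {R : ℝ}
    (hf : ∀ x ∈ sphere c R, HasFDerivAt f (0 : E2 →L[ℝ] ℝ) x) {x y : E2} (hx : x ∈ sphere c R)
    (hy : y ∈ sphere c R) : f x = f y := by
  let J : ℂ ≃ₗᵢ[ℝ] E2 := Complex.orthonormalBasisOneI.repr
  let γ (θ : ℝ) : E2 := J (circleMap 0 R θ) + c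
  have sphere_param {x} (hx : x ∈ sphere c R) : ∃ θ, γ θ = x := by
    have : J.symm (x - c) ∈ sphere (0 : ℂ) |R| := by
      rw [mem_sphere_zero_iff_norm, J.symm.norm_map, mem_sphere_iff_norm.1 hx, abs_of_nonneg
        (nonneg_of_mem_sphere hx)]
    rw [← range_circleMap] at this
    obtain ⟨θ, hθ⟩ := this
    exact ⟨θ, by simp [γ, hθ]⟩
  have γ_mem (θ) : γ θ ∈ sphere c R := by
    rw [mem_sphere_iff_norm, add_sub_cancel_right, J.norm_map, norm_circleMap_zero,
      abs_of_nonneg (nonneg_of_mem_sphere hx)]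
  have deriv_zero (θ : ℝ) : HasDerivAt (f ∘ γ) 0 θ :=
    (hf _ (γ_mem θ)).comp_hasDerivAt θ
      ((J.toContinuousLinearEquiv.hasFDerivAt.comp_hasDerivAt θ
        (hasDerivAt_circleMap 0 R θ)).add_const c)
  obtain ⟨θ, rfl⟩ := sphere_param hx
  obtain ⟨θ', rfl⟩ := sphere_param hy
  exact is_const_of_deriv_eq_zero (fun θ => (deriv_zero θ).differentiableAt)
    (fun θ => (deriv_zero θ).deriv) θ θ'

theorem exists_fderiv_eq_zero_of_eqOn_sphere {E : Type*} [NormedAddCommGroup E]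
    [NormedSpace ℝ E] [ProperSpace E] {f : E → ℝ} {c : E} {R C : ℝ} (hR : 0 < R)
    (hf : ContinuousOn f (closedBall c R)) (hfC : ∀ x ∈ sphere c R, f x = C) :
    ∃ x ∈ ball c R, fderiv ℝ f x = 0 := by
  by_cases h_lt : ∃ z ∈ ball c R, f z < C
  · obtain ⟨z, hz, hzC⟩ := h_lt
    obtain ⟨x, hx, hmin⟩ := exists_isLocalMin_mem_ball hf (ball_subset_closedBall hz)
      fun y hy => hzC.trans_eq (hfC y hy).symm
    exact ⟨x, hx, hmin.fderiv_eq_zero⟩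
  by_cases h_gt : ∃ z ∈ ball c R, C < f z
  · obtain ⟨z, hz, hzC⟩ := h_gt
    obtain ⟨x, hx, hmin⟩ := exists_isLocalMin_mem_ball (f := -f) hf.neg
      (ball_subset_closedBall hz) fun y hy => neg_lt_neg ((hfC y hy).trans_lt hzC)
    exact ⟨x, hx, by simpa only [fderiv_neg, neg_eq_zero] using hmin.fderiv_eq_zero⟩
  push Not at h_lt h_gt
  have locally_const : f =ᶠ[𝓝 c] fun _ => C := by
    filter_upwards [ball_mem_nhds c hR] with x hx
    exact le_antisymm (h_gt x hx) (h_lt x hx)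
  exact ⟨c, mem_ball_self hR, locally_const.fderiv_eq.trans (fderiv_const_apply C)⟩

namespace IsGraph

variable {U : Set E2} {k X Y Z s p : E2 → ℝ}

theorem jacobian_fst_slope_snd_ne_zero (h : IsGraph U k X Y Z s p) {q : E2} (hq : q ∈ U)
    (hk : k q = 0) (hp : fderiv ℝ p q ≠ 0) : jacobian X p q ≠ 0 := by
  intro h_zero
  have hD := h.jacobian_ne_zero q hq
  obtain ⟨μ, fderiv_p⟩ : ∃ μ : ℝ, fderiv ℝ p q = μ • fderiv ℝ X q :=
    ⟨_, by simpa [show wedge (fderiv ℝ X q) (fderiv ℝ p q) = 0 from h_zero] using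
      eq_wedge_smul_add hD (fderiv ℝ p q)⟩
  have hμ : μ ≠ 0 := fun h_zero => hp (by rw [fderiv_p, h_zero, zero_smul])
  have jacobian_s_X : jacobian s X q = 0 := by
    have : jacobian s p q = μ * jacobian s X q := by
      simp only [jacobian, fderiv_p, wedge, _root_.smul_apply, smul_eq_mul]
      ring
    simpa [this, hk, hD, hμ] using h.curvature q hq
  have jacobian_p_Y : jacobian p Y q = μ * jacobian X Y q := by
    simp only [jacobian, fderiv_p, wedge, _root_.smul_apply, smul_eq_mul]
    ring
  simpa [jacobian_s_X, jacobian_p_Y, hμ, hD] using h.jacobian_slopes hq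

theorem fderiv_slope_snd_ne_zero (h : IsGraph U k X Y Z s p) {x : E2} (hx : x ∈ U)
    (hk : k x ≠ 0) : fderiv ℝ p x ≠ 0 := fun h_zero => by
  have := h.curvature x hx
  exact hk (this ▸ by simp [jacobian, wedge, h_zero])

theorem exists_sphere_jacobian_ne_zero (h : IsGraph U k X Y Z s p) {P : E2} {R : ℝ} (hR : 0 < R)
    (hsub : closedBall P R ⊆ U) (hk_inside : ∀ x ∈ ball P R, k x ≠ 0)
    (hk_sphere : ∀ x ∈ sphere P R, k x = 0) : ∃ q ∈ sphere P R, jacobian X p q ≠ 0 := by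
  by_contra! hcon
  have critical (x) (hx : x ∈ sphere P R) : HasFDerivAt p (0 : E2 →L[ℝ] ℝ) x := by
    have hxU := hsub (sphere_subset_closedBall hx)
    have : fderiv ℝ p x = 0 := by_contra fun h_ne =>
      h.jacobian_fst_slope_snd_ne_zero hxU (hk_sphere x hx) h_ne (hcon x hx)
    exact this ▸ hasFDerivAt_of_contDiffOn h.contDiffOn_slope_snd h.isOpen hxU
  obtain ⟨q, hq⟩ := (NormedSpace.sphere_nonempty (x := P)).2 hR.le
  obtain ⟨x, hx, fderiv_zero⟩ := exists_fderiv_eq_zero_of_eqOn_sphere hR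
    (h.contDiffOn_slope_snd.continuousOn.mono hsub)
    fun x hx => eqOn_sphere_of_hasFDerivAt_zero critical hx hq
  exact h.fderiv_slope_snd_ne_zero (hsub (ball_subset_closedBall hx)) (hk_inside x hx) fderiv_zero

theorem false_of_hub {ι : Type*} {P : ι → E2} {ρ : ι → ℝ} {i : ι}
    (h : IsGraph U k X Y Z s p) (hρ : ∀ i, 0 < ρ i) (hub : IsHubBall P ρ i)
    (hsub : closedBall (P i) (ρ i) ⊆ U) (hk : ∀ x ∈ U, 0 ≤ k x)
    (hk_outside : ∀ x ∈ U, (∀ j, x ∉ ball (P j) (ρ j)) → k x = 0)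
    (hk_lower : ∀ j, ∃ c > 0, ∀ x ∈ U, c * (ρ j ^ 2 - ‖x - P j‖ ^ 2) ≤ k x) : False := by
  obtain ⟨q, hq, hJ⟩ := h.exists_sphere_jacobian_ne_zero (hρ i) hsub
    (fun x hx => by
      obtain ⟨c, hc, lower⟩ := hk_lower i
      refine (lt_of_lt_of_le (mul_pos hc (sub_pos.2 ?_))
        (lower x (hsub (ball_subset_closedBall hx)))).ne'
      exact pow_lt_pow_left₀ (mem_ball_iff_norm.1 hx) (norm_nonneg _) two_ne_zero)
    (fun x hx => hk_outside x (hsub (sphere_subset_closedBall hx)) (hub.notMem_ball x hx))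
  have hqU := hsub (sphere_subset_closedBall hq)
  wlog pos : 0 < jacobian X Y q ^ 3 * jacobian X p q generalizing Z s p
  · refine this h.neg (by rwa [jacobian_neg_right, neg_ne_zero]) ?_
    rw [jacobian_neg_right, mul_neg, neg_pos]
    exact (not_lt.1 pos).lt_of_ne (mul_ne_zero (pow_ne_zero 3 (h.jacobian_ne_zero q hqU)) hJ)
  obtain ⟨ε, hε, ball_ε⟩ := Metric.isOpen_iff.1
    (h.continuousOn_jacobian_mul.isOpen_inter_preimage h.isOpen isOpen_Ioi) q ⟨hqU, pos⟩
  obtain ⟨j, hj, isolated⟩ := hub.exists_isolated q hq ε hε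
  obtain ⟨c, hc, lower⟩ := hk_lower j
  have ball_U : ball q ε ⊆ U := fun x hx => (ball_ε hx).1
  refine (h.mono isOpen_ball ball_U).false_of_isolated_disc (fun x hx => (ball_ε hx).2) (hρ j) hc hj
    (fun x hx => hk x (ball_U hx)) (fun x hx => lower x (ball_U hx)) fun x hx hxP hxj => ?_
  refine hk_outside x (ball_U hx) fun l => ?_
  rcases eq_or_ne l j with rfl | hl
  exacts [hxj, isolated.notMem_ball hxP hl]

end IsGraph

end Hub

/-! ### The conformal metric -/

section ConformalMetric

open Laplacian

variable {U : Set E2} {l F : E2 → ℝ} {x : E2}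

theorem gaussK_smul_one (hl : ContDiff ℝ 2 l) (x : E2) :
    gaussK (fun y => l y • (1 : Matrix (Fin 2) (Fin 2) ℝ)) x =
      conformalCurvature l x / (l x ^ 2) ^ 2 := by
  have pd_zero (i : Fin 2) : pd i (fun _ => 0) = fun _ => 0 :=
    funext fun y => by simp [pd]
  have second (i : Fin 2) : pd i (pd i l) x = pderiv₂ i i l x :=
    pderiv_pderiv hl.contDiffOn isOpen_univ (mem_univ x) i i
  have first (i : Fin 2) : pd i l x = pderiv i l x := rfl
  simp only [gaussK, Matrix.smul_apply, Matrix.one_apply_eq, smul_eq_mul, mul_one, mul_zero,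
    Matrix.one_apply_ne zero_ne_one, pd_zero, second, first, conformalCurvature,
    laplacian_eq_sum_pderiv₂, Fin.sum_univ_two, Matrix.det_fin_three]
  congr 1
  · simp only [of_apply, cons_val', cons_val]
    ring
  · ring

theorem pderiv_exp (hF : Differentiable ℝ F) (i : Fin 2) (x : E2) :
    pderiv i (fun y => Real.exp (-2 * F y)) x = -2 * Real.exp (-2 * F x) * pderiv i F x := by
  have := ((hF x).hasFDerivAt.const_mul (-2)).exp.fderiv
  rw [pderiv, this]
  simp only [_root_.smul_apply, smul_eq_mul, pderiv]
  ring

theorem conformalCurvature_exp (hF : ContDiff ℝ 2 F) (x : E2) :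
    conformalCurvature (fun y => Real.exp (-2 * F y)) x = Real.exp (-2 * F x) ^ 3 * Δ F x := by
  have diff := hF.differentiable two_ne_zero
  have smooth : ContDiff ℝ 2 fun y => Real.exp (-2 * F y) := (contDiff_const.mul hF).exp
  have second (i : Fin 2) : pderiv₂ i i (fun y => Real.exp (-2 * F y)) x =
      Real.exp (-2 * F x) * (4 * pderiv i F x ^ 2 - 2 * pderiv₂ i i F x) := by
    have outer := ((diff x).hasFDerivAt.const_mul (-2)).exp.const_mul (-2)
    have product_rule :=
      (outer.mul (hasFDerivAt_pderiv hF.contDiffOn isOpen_univ (mem_univ x) i)).fderiv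
    rw [← pderiv_pderiv smooth.contDiffOn isOpen_univ (mem_univ x), funext (pderiv_exp diff i),
      pderiv]
    refine (congrArg (fun A => A (EuclideanSpace.single i 1)) product_rule).trans ?_
    simp only [_root_.add_apply, _root_.smul_apply, ContinuousLinearMap.flip_apply, smul_eq_mul,
      pderiv, pderiv₂]
    ring
  simp only [conformalCurvature, laplacian_eq_sum_pderiv₂, pderiv_exp diff, second,
    Fin.sum_univ_two]
  ring

theorem isConformalImmersion_of_jac {u : E2 → EuclideanSpace ℝ (Fin 3)}
    (hu : ContDiffOn ℝ 2 u U)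
    (h : ∀ x ∈ U, (Jac u x)ᵀ * Jac u x = l x • (1 : Matrix (Fin 2) (Fin 2) ℝ)) :
    IsConformalImmersion U l u where
  contDiffOn := hu
  inner_pderiv x hx i j := by
    have entry := congrFun (congrFun (h x hx) i) j
    rw [Matrix.smul_apply, Matrix.one_apply, smul_eq_mul, mul_ite, mul_one, mul_zero] at entry
    rw [← entry, Matrix.mul_apply, PiLp.inner_apply]
    exact Finset.sum_congr rfl fun m _ => mul_comm _ _

theorem exists_conformalCurvature_exp_ge (hF : ContDiff ℝ 2 F) (hΔ : ∀ x, 0 ≤ Δ F x) {p : E2}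
    {c ρ : ℝ} (hc : 0 < c) (hlower : ∀ x, c * (ρ ^ 2 - ‖x - p‖ ^ 2) ≤ Δ F x) (r : ℝ) :
    ∃ c' > 0, ∀ x ∈ ball (0 : E2) r, c' * (ρ ^ 2 - ‖x - p‖ ^ 2) ≤
      conformalCurvature (fun y => Real.exp (-2 * F y)) x := by
  have weight_pos (x : E2) : 0 < Real.exp (-2 * F x) ^ 3 := by positivity
  have weight_cont : Continuous fun x => Real.exp (-2 * F x) ^ 3 := by
    have := hF.continuous
    fun_prop
  obtain ⟨a, ha, weight_ge⟩ := (isCompact_closedBall (0 : E2) r).exists_forall_le'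
    weight_cont.continuousOn (fun x _ => weight_pos x)
  refine ⟨a * c, mul_pos ha hc, fun x hx => ?_⟩
  rw [conformalCurvature_exp hF]
  calc a * c * (ρ ^ 2 - ‖x - p‖ ^ 2) = a * (c * (ρ ^ 2 - ‖x - p‖ ^ 2)) := mul_assoc _ _ _
    _ ≤ a * Δ F x := mul_le_mul_of_nonneg_left (hlower x) ha.le
    _ ≤ Real.exp (-2 * F x) ^ 3 * Δ F x :=
      mul_le_mul_of_nonneg_right (weight_ge x (ball_subset_closedBall hx)) (hΔ x)

end ConformalMetric

theorem exists_isC21_forall_not_isConformalImmersion :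
    ∃ l : E2 → ℝ, IsC21 l ∧ (∀ x, 0 < l x) ∧ (∀ x, 0 ≤ conformalCurvature l x) ∧
      ∀ U : Set E2, IsOpen U → 0 ∈ U →
        ∀ u : E2 → EuclideanSpace ℝ (Fin 3), ¬IsConformalImmersion U l u := by
  obtain ⟨P, ρ, hρ, hubs⟩ := exists_isHubBall_near_zero (E := E2)
  obtain ⟨F, hF, hΔ, flat, lower⟩ := exists_potential P hρ
  have curvature := conformalCurvature_exp hF.contDiff
  have smooth : ContDiff ℝ 3 fun t : ℝ => Real.exp (-2 * t) := by fun_prop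
  have nonneg (x : E2) : 0 ≤ conformalCurvature (fun y => Real.exp (-2 * F y)) x := by
    rw [curvature]
    exact mul_nonneg (by positivity) (hΔ x)
  have hl : IsC21 fun x => Real.exp (-2 * F x) := (IsC21.of_contDiff smooth).comp hF
  refine ⟨_, hl, fun x => Real.exp_pos _, nonneg, fun U hU h0 u hu => ?_⟩
  obtain ⟨m, hm⟩ := hu.exists_jacobian_ne_zero hU h0 (Real.exp_ne_zero _)
  have jacobian_cont := continuousOn_jacobian hU
    ((contDiffOn_component hu.contDiffOn (m + 1)).of_le one_le_two)
    ((contDiffOn_component hu.contDiffOn (m + 2)).of_le one_le_two)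
  obtain ⟨ε, hε, hball⟩ := Metric.isOpen_iff.1
    (jacobian_cont.isOpen_inter_preimage hU isOpen_compl_singleton) 0 ⟨h0, hm⟩
  obtain ⟨s, p, graph⟩ := (hu.mono fun x hx => (hball hx).1).isGraph isOpen_ball
    hl.contDiff.contDiffOn m fun x hx => (hball hx).2
  obtain ⟨i, hsub, hub⟩ := hubs ε hε
  refine graph.false_of_hub hρ hub hsub (fun x _ => nonneg x) (fun x _ hx => ?_) fun j => ?_
  · rw [curvature, flat x hx, mul_zero]
  · obtain ⟨c, hc, hlower⟩ := lower j
    exact exists_conformalCurvature_exp_ge hF.contDiff hΔ hc hlower ε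

theorem nadirashvili_yuan_general :
    ∃ g : E2 → Matrix (Fin 2) (Fin 2) ℝ,
      IsC21 g ∧ (∀ x, (g x).IsSymm ∧ (g x).PosDef) ∧ (∀ x, 0 ≤ gaussK g x) ∧
      ∀ U : Set E2, IsOpen U → 0 ∈ U →
        ¬ ∃ u : E2 → EuclideanSpace ℝ (Fin 3),
            ContDiffOn ℝ 2 u U ∧ ∀ x ∈ U, (Jac u x)ᵀ * Jac u x = g x := by
  obtain ⟨l, hl, hpos, curvature_nonneg, not_immersion⟩ :=
    exists_isC21_forall_not_isConformalImmersion
  refine ⟨fun x => l x • 1, ?_,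
    fun x => ⟨Matrix.isSymm_one.smul _, Matrix.PosDef.one.smul (hpos x)⟩, fun x => ?_,
    fun U hU h0 ⟨u, hu, isometric⟩ => ?_⟩
  · exact (IsC21.of_contDiff (contDiff_id.smul contDiff_const)).comp hl
  · rw [gaussK_smul_one hl.contDiff]
    exact div_nonneg (curvature_nonneg x) (by positivity)
  · exact not_immersion U hU h0 u (isConformalImmersion_of_jac hu isometric)

/-- **Nadirashvili–Yuan (2008).** There exists a `C^{2,1}` Riemannian metric `g` on the
unit ball `B₁ ⊂ ℝ²` with nonnegative Gauss curvature such that no neighborhood `B_r` of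
the origin admits a `C²` isometric immersion of `(B_r, g)` into `ℝ³`. -/
theorem nadirashvili_yuan :
    ∃ g : E2 → Matrix (Fin 2) (Fin 2) ℝ,
      ContDiffOn ℝ 2 g (ball (0 : E2) 1) ∧
      (∃ L : NNReal, LipschitzOnWith L (fun x => iteratedFDeriv ℝ 2 g x) (ball (0 : E2) 1)) ∧
      (∀ x ∈ ball (0 : E2) 1, (g x).IsSymm ∧ (g x).PosDef) ∧
      (∀ x ∈ ball (0 : E2) 1, 0 ≤ gaussK g x) ∧
      ∀ r : ℝ, 0 < r → r ≤ 1 →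
        ¬ ∃ u : E2 → EuclideanSpace ℝ (Fin 3),
            ContDiffOn ℝ 2 u (ball (0 : E2) r) ∧
            ∀ x ∈ ball (0 : E2) r, (Jac u x)ᵀ * Jac u x = g x := by
  obtain ⟨g, hg, metric, curvature_nonneg, not_immersion⟩ := nadirashvili_yuan_general
  obtain ⟨L, lipschitz⟩ := hg.exists_lipschitzOnWith (isCompact_closedBall 0 1)
  exact ⟨g, hg.contDiff.contDiffOn, ⟨L, lipschitz.mono ball_subset_closedBall⟩,
    fun x _ => metric x, fun x _ => curvature_nonneg x,
    fun r hr _ => not_immersion _ isOpen_ball (mem_ball_self hr)⟩
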